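/- arXiv:2312.07373 — 4 statements merged into one kernel-verified Lean document; each statement's English description precedes it below -/
import Mathlib

section
/- Fix β > 0, d ≥ 1, s ≥ 0 and ℓ ≥ 0, and suppose f ∈ A(s, ℓ, ℓ). Then for all R > 0 and all p ≥ 2·p_M(s, ℓ) there exists a constant L̃ = L̃(R, p) > 0 such that for all probability measures μ ∈ P_{p,R}(ℝ^d) and ν ∈ P_p(ℝ^d), ‖√C_β(μ) − √C_β(ν)‖_F ≤ L̃ · W_p(μ, ν). -/
open MeasureTheory ENNReal
open scoped NNReal

noncomputable section

/-- Euclidean space `ℝ^d`. -/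
abbrev Rd (d : ℕ) := EuclideanSpace ℝ (Fin d)

/-- The weight function `x ↦ exp (-β f x)`. -/
def wFn (β : ℝ) {d : ℕ} (f : Rd d → ℝ) (x : Rd d) : ℝ := Real.exp (-β * f x)

/-- The weighted mean `M_β(μ) = (∫ x e^{-β f x} dμ) / (∫ e^{-β f x} dμ)`. -/
def wMean (β : ℝ) {d : ℕ} (f : Rd d → ℝ) (μ : Measure (Rd d)) : Rd d :=
  (∫ x, wFn β f x ∂μ)⁻¹ • ∫ x, wFn β f x • x ∂μ

/-- The weighted covariance `C_β(μ)`, a `d × d` matrix. -/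
def wCov (β : ℝ) {d : ℕ} (f : Rd d → ℝ) (μ : Measure (Rd d)) :
    Matrix (Fin d) (Fin d) ℝ := fun i j =>
  (∫ x, wFn β f x ∂μ)⁻¹ *
    ∫ x, wFn β f x * ((x i - wMean β f μ i) * (x j - wMean β f μ j)) ∂μ

/-- Frobenius norm of a matrix. -/
def frobNorm {m n : ℕ} (A : Matrix (Fin m) (Fin n) ℝ) : ℝ :=
  Real.sqrt (∑ i, ∑ j, (A i j) ^ 2)

/-- `S` is the (unique) positive semidefinite square root of `A`. -/
def IsPSDSqrt {d : ℕ} (S A : Matrix (Fin d) (Fin d) ℝ) : Prop :=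
  S.PosSemidef ∧ S * S = A

/-- `μ ∈ P_{p,R}`: the `p`-th moment of `μ` is bounded, `(∫ |x|^p dμ)^{1/p} ≤ R`. -/
def MomLE (p R : ℝ) {d : ℕ} (μ : Measure (Rd d)) : Prop :=
  ∫⁻ x, (‖x‖₊ : ℝ≥0∞) ^ p ∂μ ≤ ENNReal.ofReal (R ^ p)

/-- `μ ∈ P_p`: the `p`-th moment of `μ` is finite. -/
def MomFin (p : ℝ) {d : ℕ} (μ : Measure (Rd d)) : Prop :=
  ∫⁻ x, (‖x‖₊ : ℝ≥0∞) ^ p ∂μ < ⊤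

/-- The Wasserstein-`p` distance between two probability measures on `ℝ^d`:
the infimum over couplings `π` of `μ` and `ν` of `(∬ |x - y|^p dπ)^{1/p}`. -/
def Wp (p : ℝ) {d : ℕ} (μ ν : Measure (Rd d)) : ℝ :=
  (sInf {c : ℝ≥0∞ | ∃ π : Measure (Rd d × Rd d),
      π.map Prod.fst = μ ∧ π.map Prod.snd = ν ∧
      c = (∫⁻ z, (‖z.1 - z.2‖₊ : ℝ≥0∞) ^ p ∂π) ^ (1 / p)}).toReal

/-- `f_* = inf f`. -/
def fStar {d : ℕ} (f : Rd d → ℝ) : ℝ := sInf (Set.range f)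

/-- The class `A(s, ℓ, u)` of objective functions: `f` is bounded from below,
locally Lipschitz with growth exponent `s`, and `f - inf f` grows at least like
`|x|^ℓ` and at most like `|x|^u`. -/
structure ClassA {d : ℕ} (s ℓ u : ℝ) (f : Rd d → ℝ) : Prop where
  bddBelow : BddBelow (Set.range f)
  lip : ∃ Lf > 0, ∀ x y : Rd d, |f x - f y| ≤ Lf * (1 + ‖x‖ + ‖y‖) ^ s * ‖x - y‖
  growth_lower : ∃ cl > 0, ∃ Cl > 0, ∀ x : Rd d, cl * ‖x‖ ^ ℓ - Cl ≤ f x - fStar f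
  growth_upper : ∃ cu > 0, ∃ Cu > 0, ∀ x : Rd d, f x - fStar f ≤ cu * ‖x‖ ^ u + Cu

/-- `p_M(s, ℓ) = s + 2` if `ℓ = 0`, and `1` if `ℓ > 0`. -/
def pM (s ℓ : ℝ) : ℝ := if ℓ = 0 then s + 2 else 1

/-- `p_C(s, ℓ) = s + 3` if `ℓ = 0`, and `1` if `ℓ > 0`. -/
def pC (s ℓ : ℝ) : ℝ := if ℓ = 0 then s + 3 else 1

/-!
Realise `μ` and `ν` by random variables `X` and `Y` on a space with a probability measure `π`, and
put `a = e^{-βf(X)/2}` and `bᵢ = Xᵢ e^{-βf(X)/2}` in `L²(π)`. Then `C_β(μ)` is the Gram matrix of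
the vectors `gᵢ` obtained by projecting `bᵢ / ‖a‖` onto `a^⊥`, and `C_β(ν)` that of vectors `hᵢ`
built in the same way from `Y`. The square roots of two Gram matrices satisfy
`‖√(gᵢ·gⱼ) - √(hᵢ·hⱼ)‖_F² ≤ 2 ∑ ‖gᵢ - hᵢ‖²` because each family is a contraction applied to the
columns of the square root of its Gram matrix. So it is enough to bound `‖gᵢ - hᵢ‖` by the
`L^p`-distance of `X` and `Y`.

If `‖X - Y‖_p ≤ 1`, both laws have `p`-th moments at most `R + 1`; there `‖a‖` is bounded below,
and `x ↦ e^{-βf(x)/2}` and `x ↦ x e^{-βf(x)/2}` are Lipschitz up to a factor of growth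
`p_M - 1 ≤ p/2 - 1`, which Hölder's inequality absorbs. If `‖X - Y‖_p ≥ 1`, the bound
`‖gᵢ‖ ≤ c ‖X‖₂` suffices, with `c` independent of the law: as `f` grows equally fast from below and
from above, the weight at points far from the origin is dominated by the weight at points closer
to it.
-/

section SqrtGram

open Matrix

section Douglas

variable {E F H : Type*} [AddCommGroup E] [Module ℝ E]
  [NormedAddCommGroup F] [InnerProductSpace ℝ F] [FiniteDimensional ℝ F]
  [NormedAddCommGroup H] [InnerProductSpace ℝ H]

theorem exists_opNorm_le_one_comp_eq {A : E →ₗ[ℝ] H} {S : E →ₗ[ℝ] F}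
    (h : ∀ x, ‖A x‖ ≤ ‖S x‖) : ∃ W : F →L[ℝ] H, ‖W‖ ≤ 1 ∧ ∀ x, W (S x) = A x := by
  obtain ⟨r, hr⟩ := S.rangeRestrict.exists_rightInverse_of_surjective S.range_rangeRestrict
  have hSr (y : S.range) : S (r y) = y := congrArg Subtype.val (LinearMap.congr_fun hr y)
  let W₀ : S.range →L[ℝ] H :=
    (A ∘ₗ r).mkContinuous 1 fun y => by simpa [hSr] using h (r y)
  refine ⟨W₀ ∘L S.range.orthogonalProjectionOnto, ?_, fun x => ?_⟩
  · calc ‖W₀ ∘L S.range.orthogonalProjectionOnto‖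
        ≤ ‖W₀‖ * ‖S.range.orthogonalProjectionOnto‖ := W₀.opNorm_comp_le _
      _ ≤ 1 * 1 := by
          gcongr
          · exact LinearMap.mkContinuous_norm_le _ zero_le_one _
          · exact S.range.orthogonalProjectionOnto_norm_le
      _ = 1 := one_mul 1
  · have hproj : S.range.orthogonalProjectionOnto (S x) = S.rangeRestrict x :=
      S.range.orthogonalProjectionOnto_mem_subspace_eq_self (S.rangeRestrict x)
    have hker : ‖A (r (S.rangeRestrict x) - x)‖ ≤ 0 := by
      simpa [hSr] using h (r (S.rangeRestrict x) - x)
    simpa [W₀, hproj, sub_eq_zero] using hker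

end Douglas

variable {ι : Type*} [Fintype ι]

open scoped MatrixOrder in
theorem trace_mul_nonneg_of_posSemidef {A B : Matrix ι ι ℝ} (hA : A.PosSemidef)
    (hB : B.PosSemidef) : 0 ≤ (A * B).trace := by
  classical
  obtain ⟨C, rfl⟩ := CStarAlgebra.nonneg_iff_eq_star_mul_self.mp hA.nonneg
  rw [star_eq_conjTranspose, Matrix.mul_assoc, trace_mul_comm]
  exact (hB.mul_mul_conjTranspose_same C).trace_nonneg

theorem two_mul_trace_mul_mul_le {S T : Matrix ι ι ℝ} (hS : S.PosSemidef) (hT : T.PosSemidef)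
    (K : Matrix ι ι ℝ) :
    2 * (S * K * T).trace ≤ (S * T).trace + (S * (K * T * Kᴴ)).trace := by
  classical
  have hnonneg : 0 ≤ (S * ((K - 1) * T * (K - 1)ᴴ)).trace :=
    trace_mul_nonneg_of_posSemidef hS (hT.mul_mul_conjTranspose_same _)
  have hexpand : S * ((K - 1) * T * (K - 1)ᴴ) =
      S * T + S * (K * T * Kᴴ) - S * K * T - S * T * Kᴴ := by
    rw [conjTranspose_sub, conjTranspose_one]
    noncomm_ring
  have hflip : (S * T * Kᴴ).trace = (S * K * T).trace :=
    calc (S * T * Kᴴ).trace = ((S * T * Kᴴ)ᴴ).trace := by rw [trace_conjTranspose, star_trivial]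
      _ = (K * T * S).trace := by
          rw [conjTranspose_mul, conjTranspose_mul, conjTranspose_conjTranspose,
            hS.isHermitian.eq, hT.isHermitian.eq, Matrix.mul_assoc]
      _ = (S * K * T).trace := by rw [trace_mul_comm, Matrix.mul_assoc]
  rw [hexpand, trace_sub, trace_sub, trace_add, hflip] at hnonneg
  linarith

theorem two_mul_trace_conjTranspose_mul_le (A B : Matrix ι ι ℝ) :
    2 * (Aᴴ * B).trace ≤ (Aᴴ * A).trace + (Bᴴ * B).trace := by
  have hnonneg := (posSemidef_conjTranspose_mul_self (A - B)).trace_nonneg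
  have hexpand : (A - B)ᴴ * (A - B) = Aᴴ * A + Bᴴ * B - Aᴴ * B - (Aᴴ * B)ᴴ := by
    rw [conjTranspose_sub, conjTranspose_mul, conjTranspose_conjTranspose]
    noncomm_ring
  rw [hexpand, trace_sub, trace_sub, trace_add, trace_conjTranspose, star_trivial] at hnonneg
  linarith

theorem trace_conjTranspose_mul_self_eq_sum_norm_sq [DecidableEq ι] (A : Matrix ι ι ℝ) :
    (Aᴴ * A).trace = ∑ j, ‖toEuclideanCLM (𝕜 := ℝ) A (EuclideanSpace.single j 1)‖ ^ 2 := by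
  simp [trace, mul_apply, EuclideanSpace.norm_sq_eq, ← sq]

open scoped Matrix.Norms.L2Operator in
theorem trace_conjTranspose_mul_self_mul_le [DecidableEq ι] {K : Matrix ι ι ℝ} (hK : ‖K‖ ≤ 1)
    (M : Matrix ι ι ℝ) : ((K * M)ᴴ * (K * M)).trace ≤ (Mᴴ * M).trace := by
  simp only [trace_conjTranspose_mul_self_eq_sum_norm_sq, map_mul,
    mul_apply_eq_comp]
  gcongr with j
  exact ContinuousLinearMap.le_of_opNorm_le _ hK _ |>.trans_eq (one_mul _)

open scoped Matrix.Norms.L2Operator in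
theorem trace_conjTranspose_mul_self_conj_le [DecidableEq ι] {K : Matrix ι ι ℝ} (hK : ‖K‖ ≤ 1)
    (T : Matrix ι ι ℝ) : ((K * T * Kᴴ)ᴴ * (K * T * Kᴴ)).trace ≤ (Tᴴ * T).trace :=
  calc ((K * T * Kᴴ)ᴴ * (K * T * Kᴴ)).trace
      = ((K * (T * Kᴴ))ᴴ * (K * (T * Kᴴ))).trace := by rw [Matrix.mul_assoc K]
    _ ≤ ((T * Kᴴ)ᴴ * (T * Kᴴ)).trace := trace_conjTranspose_mul_self_mul_le hK _
    _ = ((K * Tᴴ)ᴴ * (K * Tᴴ)).trace := by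
        rw [trace_mul_comm, conjTranspose_mul, conjTranspose_mul]
        simp only [conjTranspose_conjTranspose]
    _ ≤ (Tᴴᴴ * Tᴴ).trace := trace_conjTranspose_mul_self_mul_le hK _
    _ = (Tᴴ * T).trace := by rw [conjTranspose_conjTranspose, trace_mul_comm]

open scoped Matrix.Norms.L2Operator in
theorem trace_conjTranspose_mul_self_sub_le [DecidableEq ι] {S T K : Matrix ι ι ℝ}
    (hS : S.PosSemidef) (hT : T.PosSemidef) (hK : ‖K‖ ≤ 1) :
    ((S - T)ᴴ * (S - T)).trace ≤
      2 * ((S * S).trace + (T * T).trace - 2 * (S * K * T).trace) := by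
  have hcontract := trace_conjTranspose_mul_self_conj_le hK T
  have hyoung := two_mul_trace_conjTranspose_mul_le S (K * T * Kᴴ)
  have hexpand : (S - T)ᴴ * (S - T) = S * S + T * T - S * T - T * S := by
    rw [conjTranspose_sub, hS.isHermitian.eq, hT.isHermitian.eq]
    noncomm_ring
  rw [hT.isHermitian.eq] at hcontract
  rw [hS.isHermitian.eq] at hyoung
  rw [hexpand, trace_sub, trace_sub, trace_add, trace_mul_comm T S]
  linarith [two_mul_trace_mul_mul_le hS hT K]

variable {H : Type*} [NormedAddCommGroup H] [InnerProductSpace ℝ H]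

theorem exists_opNorm_le_one_comp_toEuclideanCLM_eq [DecidableEq ι] {S : Matrix ι ι ℝ} {g : ι → H}
    (hS : S.IsHermitian) (hSg : S * S = gram ℝ g) :
    ∃ W : EuclideanSpace ℝ ι →L[ℝ] H, ‖W‖ ≤ 1 ∧
      ∀ i, W (toEuclideanCLM (𝕜 := ℝ) S (EuclideanSpace.single i 1)) = g i := by
  let A : EuclideanSpace ℝ ι →ₗ[ℝ] H :=
    Fintype.linearCombination ℝ g ∘ₗ (WithLp.linearEquiv 2 ℝ (ι → ℝ)).toLinearMap
  have hnorm (x : EuclideanSpace ℝ ι) : ‖A x‖ ^ 2 = ‖toEuclideanCLM (𝕜 := ℝ) S x‖ ^ 2 := by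
    have hgram := star_dotProduct_gram_mulVec g x.ofLp x.ofLp
    nth_rw 1 [← hSg, ← hS.eq] at hgram
    rw [← mulVec_mulVec, dotProduct_mulVec, ← star_mulVec] at hgram
    rw [← real_inner_self_eq_norm_sq, ← real_inner_self_eq_norm_sq]
    exact hgram.symm
  obtain ⟨W, hW, hWS⟩ := exists_opNorm_le_one_comp_eq
    (S := (toEuclideanCLM (𝕜 := ℝ) S).toLinearMap) fun x =>
      (sq_le_sq₀ (norm_nonneg _) (norm_nonneg _)).1 (hnorm x).le
  refine ⟨W, hW, fun i => ?_⟩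
  simpa [A] using hWS (EuclideanSpace.single i 1)

/-- Finite-rank form of the Araki–Yamagami inequality `‖|A| - |B|‖_HS ≤ √2 ‖A - B‖_HS`, for the
operators `A` and `B` with columns `g i` and `h i`. -/
theorem trace_conjTranspose_mul_self_sub_le_of_gram [CompleteSpace H] {S T : Matrix ι ι ℝ}
    {g h : ι → H} (hS : S.PosSemidef) (hT : T.PosSemidef) (hSg : S * S = gram ℝ g)
    (hTh : T * T = gram ℝ h) :
    ((S - T)ᴴ * (S - T)).trace ≤ 2 * ∑ i, ‖g i - h i‖ ^ 2 := by
  classical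
  obtain ⟨W, hW, hWS⟩ := exists_opNorm_le_one_comp_toEuclideanCLM_eq hS.isHermitian hSg
  obtain ⟨V, hV, hVT⟩ := exists_opNorm_le_one_comp_toEuclideanCLM_eq hT.isHermitian hTh
  let K : Matrix ι ι ℝ := (toEuclideanCLM (𝕜 := ℝ)).symm (W.adjoint ∘L V)
  have hK : ‖toEuclideanCLM (𝕜 := ℝ) K‖ ≤ 1 := by
    rw [StarAlgEquiv.apply_symm_apply]
    calc ‖W.adjoint ∘L V‖ ≤ ‖W.adjoint‖ * ‖V‖ := W.adjoint.opNorm_comp_le V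
      _ ≤ 1 := mul_le_one₀ (by rwa [LinearIsometryEquiv.norm_map]) (norm_nonneg V) hV
  have hinner (i : ι) : inner ℝ (g i) (h i) = (S * K * T) i i := by
    have hKT : toEuclideanCLM (𝕜 := ℝ) (K * T) (EuclideanSpace.single i 1) =
        W.adjoint (h i) := by
      rw [map_mul, StarAlgEquiv.apply_symm_apply, ← hVT]
      rfl
    calc inner ℝ (g i) (h i)
        = inner ℝ (toEuclideanCLM (𝕜 := ℝ) S (EuclideanSpace.single i 1))
            (toEuclideanCLM (𝕜 := ℝ) (K * T) (EuclideanSpace.single i 1)) := by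
          rw [hKT, ContinuousLinearMap.adjoint_inner_right, hWS]
      _ = inner ℝ (EuclideanSpace.single i 1)
            (toEuclideanCLM (𝕜 := ℝ) (S * K * T) (EuclideanSpace.single i 1)) := by
          rw [Matrix.mul_assoc, map_mul _ S]
          exact isSymmetric_toEuclideanLin_iff.2 hS.isHermitian _ _
      _ = (S * K * T) i i := by rw [inner_toEuclideanCLM]; simp
  have htrace : (S * K * T).trace = ∑ i, inner ℝ (g i) (h i) := by
    simp only [trace, diag, hinner]
  refine (trace_conjTranspose_mul_self_sub_le hS hT hK).trans_eq ?_
  have hgram (u : ι → H) : (gram ℝ u).trace = ∑ i, ‖u i‖ ^ 2 := by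
    simp [trace]
  simp only [htrace, hSg, hTh, hgram, norm_sub_sq_real, Finset.sum_add_distrib,
    Finset.sum_sub_distrib, ← Finset.mul_sum]
  ring

theorem frobNorm_sq {d : ℕ} (A : Matrix (Fin d) (Fin d) ℝ) : frobNorm A ^ 2 = (Aᴴ * A).trace := by
  rw [frobNorm, Real.sq_sqrt (by positivity), Finset.sum_comm]
  simp [trace, mul_apply, sq]

theorem frobNorm_sub_le_of_gram [CompleteSpace H] {d : ℕ} {S T : Matrix (Fin d) (Fin d) ℝ}
    {g h : Fin d → H} (hS : IsPSDSqrt S (gram ℝ g)) (hT : IsPSDSqrt T (gram ℝ h)) :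
    frobNorm (S - T) ≤ √(2 * ∑ i, ‖g i - h i‖ ^ 2) := by
  refine Real.le_sqrt_of_sq_le ?_
  rw [frobNorm_sq]
  exact trace_conjTranspose_mul_self_sub_le_of_gram hS.1 hT.1 hS.2 hT.2

end SqrtGram

section NormalizedResidual

variable {H : Type*} [NormedAddCommGroup H] [InnerProductSpace ℝ H] {a a₁ a₂ b₁ b₂ e₁ e₂ : H}

theorem norm_starProjection_sub_starProjection_apply_le (he₁ : ‖e₁‖ = 1) (he₂ : ‖e₂‖ = 1) (c : H) :
    ‖(ℝ ∙ e₁).starProjection c - (ℝ ∙ e₂).starProjection c‖ ≤ 2 * ‖c‖ * ‖e₁ - e₂‖ :=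
  calc ‖(ℝ ∙ e₁).starProjection c - (ℝ ∙ e₂).starProjection c‖
      = ‖inner ℝ e₁ c • (e₁ - e₂) + inner ℝ (e₁ - e₂) c • e₂‖ := by
        rw [Submodule.starProjection_unit_singleton ℝ he₁,
          Submodule.starProjection_unit_singleton ℝ he₂, inner_sub_left]
        congr 1
        module
    _ ≤ ‖inner ℝ e₁ c‖ * ‖e₁ - e₂‖ + ‖inner ℝ (e₁ - e₂) c‖ * ‖e₂‖ :=
        (norm_add_le _ _).trans_eq (by rw [norm_smul, norm_smul])
    _ ≤ ‖e₁‖ * ‖c‖ * ‖e₁ - e₂‖ + ‖e₁ - e₂‖ * ‖c‖ * ‖e₂‖ := by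
        gcongr <;> exact norm_inner_le_norm _ _
    _ = 2 * ‖c‖ * ‖e₁ - e₂‖ := by
        rw [he₁, he₂]
        ring

theorem norm_starProjection_orthogonal_sub_le (he₁ : ‖e₁‖ = 1) (he₂ : ‖e₂‖ = 1) (c₁ c₂ : H) :
    ‖(ℝ ∙ e₁)ᗮ.starProjection c₁ - (ℝ ∙ e₂)ᗮ.starProjection c₂‖ ≤
      ‖c₁ - c₂‖ + 2 * ‖c₁‖ * ‖e₁ - e₂‖ :=
  calc ‖(ℝ ∙ e₁)ᗮ.starProjection c₁ - (ℝ ∙ e₂)ᗮ.starProjection c₂‖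
      = ‖(ℝ ∙ e₂)ᗮ.starProjection (c₁ - c₂) -
          ((ℝ ∙ e₁).starProjection c₁ - (ℝ ∙ e₂).starProjection c₁)‖ := by
        simp only [Submodule.starProjection_orthogonal_val, map_sub]
        congr 1
        abel
    _ ≤ ‖(ℝ ∙ e₂)ᗮ.starProjection (c₁ - c₂)‖ +
          ‖(ℝ ∙ e₁).starProjection c₁ - (ℝ ∙ e₂).starProjection c₁‖ := norm_sub_le _ _
    _ ≤ ‖c₁ - c₂‖ + 2 * ‖c₁‖ * ‖e₁ - e₂‖ := by
        gcongr
        · exact Submodule.norm_starProjection_apply_le _ _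
        · exact norm_starProjection_sub_starProjection_apply_le he₁ he₂ c₁

theorem norm_inv_norm_smul_sub_inv_norm_smul_le (ha₁ : a₁ ≠ 0) (ha₂ : a₂ ≠ 0) (b₁ b₂ : H) :
    ‖‖a₁‖⁻¹ • b₁ - ‖a₂‖⁻¹ • b₂‖ ≤
      ‖a₂‖⁻¹ * (‖b₁ - b₂‖ + ‖a₁‖⁻¹ * ‖b₁‖ * ‖a₁ - a₂‖) := by
  have h₁ := norm_ne_zero_iff.2 ha₁
  have h₂ := norm_ne_zero_iff.2 ha₂
  calc ‖‖a₁‖⁻¹ • b₁ - ‖a₂‖⁻¹ • b₂‖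
      = ‖‖a₂‖⁻¹ • ((b₁ - b₂) + (‖a₁‖⁻¹ * (‖a₂‖ - ‖a₁‖)) • b₁)‖ := by
        congr 1
        match_scalars <;> field_simp
        ring
    _ ≤ ‖a₂‖⁻¹ * (‖b₁ - b₂‖ + ‖a₁‖⁻¹ * |‖a₂‖ - ‖a₁‖| * ‖b₁‖) := by
        rw [norm_smul_of_nonneg (by positivity)]
        gcongr
        refine (norm_add_le _ _).trans_eq ?_
        rw [norm_smul, norm_mul, norm_inv, norm_norm, Real.norm_eq_abs]
    _ ≤ ‖a₂‖⁻¹ * (‖b₁ - b₂‖ + ‖a₁‖⁻¹ * ‖b₁‖ * ‖a₁ - a₂‖) := by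
        rw [mul_right_comm, norm_sub_rev a₁]
        gcongr
        exact abs_norm_sub_norm_le a₂ a₁

/-- The component orthogonal to `a` of `b / ‖a‖`. With `a = e^{-βf/2}` and `b = x_i e^{-βf/2}` in
`L²(μ)`, the inner products of these vectors are the entries of `C_β(μ)`. -/
def normalizedResidual (a b : H) : H :=
  (ℝ ∙ a)ᗮ.starProjection (‖a‖⁻¹ • b)

theorem normalizedResidual_eq_smul_sub (a b : H) :
    normalizedResidual a b = ‖a‖⁻¹ • (b - ((‖a‖ ^ 2)⁻¹ * inner ℝ a b) • a) := by
  rw [normalizedResidual, map_smul, Submodule.starProjection_orthogonal_val,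
    Submodule.starProjection_singleton, div_eq_inv_mul, RCLike.ofReal_real_eq_id, id]

theorem norm_normalizedResidual_le (a b : H) : ‖normalizedResidual a b‖ ≤ ‖a‖⁻¹ * ‖b‖ :=
  (Submodule.norm_starProjection_apply_le _ _).trans_eq (norm_smul_of_nonneg (by positivity) b)

theorem norm_normalizedResidual_sub_le (ha₁ : a₁ ≠ 0) (ha₂ : a₂ ≠ 0) (b₁ b₂ : H) :
    ‖normalizedResidual a₁ b₁ - normalizedResidual a₂ b₂‖ ≤
      ‖a₂‖⁻¹ * (‖b₁ - b₂‖ + 5 * (‖a₁‖⁻¹ * ‖b₁‖) * ‖a₁ - a₂‖) := by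
  have hunit {a : H} (ha : a ≠ 0) (b : H) :
      normalizedResidual a b = (ℝ ∙ (‖a‖⁻¹ • a))ᗮ.starProjection (‖a‖⁻¹ • b) := by
    have hscale : IsUnit ‖a‖⁻¹ := by simpa using ha
    simp only [normalizedResidual, Submodule.span_singleton_smul_eq hscale]
  have hdir := norm_inv_norm_smul_sub_inv_norm_smul_le ha₁ ha₂ a₁ a₂
  rw [inv_mul_cancel₀ (norm_ne_zero_iff.2 ha₁), one_mul, ← two_mul] at hdir
  calc ‖normalizedResidual a₁ b₁ - normalizedResidual a₂ b₂‖
      ≤ ‖‖a₁‖⁻¹ • b₁ - ‖a₂‖⁻¹ • b₂‖ +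
          2 * ‖‖a₁‖⁻¹ • b₁‖ * ‖‖a₁‖⁻¹ • a₁ - ‖a₂‖⁻¹ • a₂‖ := by
        rw [hunit ha₁, hunit ha₂]
        exact norm_starProjection_orthogonal_sub_le (norm_smul_inv_norm ha₁)
          (norm_smul_inv_norm ha₂) _ _
    _ ≤ ‖a₂‖⁻¹ * (‖b₁ - b₂‖ + ‖a₁‖⁻¹ * ‖b₁‖ * ‖a₁ - a₂‖) +
          2 * (‖a₁‖⁻¹ * ‖b₁‖) * (‖a₂‖⁻¹ * (2 * ‖a₁ - a₂‖)) := by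
        rw [norm_smul_of_nonneg (by positivity)]
        gcongr
        exact norm_inv_norm_smul_sub_inv_norm_smul_le ha₁ ha₂ b₁ b₂
    _ = ‖a₂‖⁻¹ * (‖b₁ - b₂‖ + 5 * (‖a₁‖⁻¹ * ‖b₁‖) * ‖a₁ - a₂‖) := by ring

end NormalizedResidual

section Weight

theorem exists_rpow_le_mul_exp_mul_rpow {b ℓ k : ℝ} (hb : 0 < b) (hℓ : 0 < ℓ) (hk : 0 < k) :
    ∃ D > 0, ∀ t : ℝ, 0 ≤ t → (1 + t) ^ k ≤ D * Real.exp (b * t ^ ℓ) := by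
  set c : ℝ := b * ℓ / (k * 2 ^ ℓ)
  have hc : 0 < c := by positivity
  refine ⟨c⁻¹ ^ (k / ℓ) * Real.exp b, by positivity, fun t ht => ?_⟩
  have hpow : (1 + t) ^ ℓ ≤ 2 ^ ℓ * (1 + t ^ ℓ) := by
    have hmax : 1 + t ≤ 2 * max 1 t := by linarith [le_max_left 1 t, le_max_right 1 t]
    calc (1 + t) ^ ℓ ≤ (2 * max 1 t) ^ ℓ := by gcongr
      _ = 2 ^ ℓ * max 1 t ^ ℓ := Real.mul_rpow zero_le_two (by positivity)
      _ ≤ 2 ^ ℓ * (1 + t ^ ℓ) := by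
          gcongr
          rcases max_choice 1 t with h | h <;> rw [h]
          · rw [Real.one_rpow]
            linarith [Real.rpow_nonneg ht ℓ]
          · linarith
  have hexp : (1 + t) ^ ℓ ≤ c⁻¹ * Real.exp (c * (1 + t) ^ ℓ) := by
    rw [le_inv_mul_iff₀ hc]
    linarith [Real.add_one_le_exp (c * (1 + t) ^ ℓ)]
  calc (1 + t) ^ k = ((1 + t) ^ ℓ) ^ (k / ℓ) := by
        rw [← Real.rpow_mul (by positivity), mul_div_cancel₀ k hℓ.ne']
    _ ≤ (c⁻¹ * Real.exp (c * (1 + t) ^ ℓ)) ^ (k / ℓ) := by gcongr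
    _ = c⁻¹ ^ (k / ℓ) * Real.exp (c * (k / ℓ) * (1 + t) ^ ℓ) := by
        rw [Real.mul_rpow (by positivity) (by positivity), ← Real.exp_mul, mul_right_comm]
    _ ≤ c⁻¹ ^ (k / ℓ) * Real.exp (c * (k / ℓ) * (2 ^ ℓ * (1 + t ^ ℓ))) := by gcongr
    _ = c⁻¹ ^ (k / ℓ) * Real.exp b * Real.exp (b * t ^ ℓ) := by
        rw [mul_assoc _ (Real.exp b), ← Real.exp_add]
        congr 2
        simp only [c]
        field_simp

variable {d : ℕ} {γ s ℓ u : ℝ} {f : Rd d → ℝ}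

theorem wFn_pos (γ : ℝ) (f : Rd d → ℝ) (x : Rd d) : 0 < wFn γ f x := Real.exp_pos _

theorem continuous_wFn (hf : Continuous f) : Continuous (wFn γ f) :=
  Real.continuous_exp.comp (continuous_const.mul hf)

theorem wFn_half_mul_self (γ : ℝ) (f : Rd d → ℝ) (x : Rd d) :
    wFn (γ / 2) f x * wFn (γ / 2) f x = wFn γ f x := by
  rw [wFn, ← Real.exp_add, wFn]
  ring_nf

theorem norm_wFn_half_sq (γ : ℝ) (f : Rd d → ℝ) (x : Rd d) :
    ‖wFn (γ / 2) f x‖ ^ 2 = wFn γ f x := by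
  rw [Real.norm_eq_abs, sq_abs, sq, wFn_half_mul_self]

theorem wFn_sub_wFn_le (γ : ℝ) (f : Rd d → ℝ) (x y : Rd d) :
    wFn γ f x - wFn γ f y ≤ wFn γ f x * (γ * (f y - f x)) := by
  have hratio : wFn γ f y = wFn γ f x * Real.exp (-(γ * (f y - f x))) := by
    rw [wFn, wFn, ← Real.exp_add]
    ring_nf
  rw [hratio, ← mul_one_sub]
  gcongr
  · exact (wFn_pos γ f x).le
  · exact Real.one_sub_le_exp_neg _ |> sub_le_comm.1

theorem wFn_sub_mul_le {L : ℝ} {x y : Rd d} (hγ : 0 ≤ γ) (hs : 0 ≤ s) (hL : 0 ≤ L)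
    (hxy : |f y - f x| ≤ L * (1 + ‖y‖ + ‖x‖) ^ s * ‖y - x‖) :
    (wFn γ f x - wFn γ f y) * (1 + ‖y‖) ≤
      (γ * L * 2 ^ (s + 1) + 2) * (wFn γ f x * (1 + ‖x‖) ^ (s + 1)) * ‖x - y‖ := by
  have hwx := wFn_pos γ f x
  have hy : ‖y‖ ≤ ‖x‖ + ‖x - y‖ := norm_le_insert x y
  rw [norm_sub_rev y x] at hxy
  rcases le_total ‖x - y‖ 1 with hclose | hfar
  · calc (wFn γ f x - wFn γ f y) * (1 + ‖y‖)
        ≤ wFn γ f x * (γ * (L * (2 * (1 + ‖x‖)) ^ s * ‖x - y‖)) * (2 * (1 + ‖x‖)) := by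
          gcongr ?_ * ?_
          · refine (wFn_sub_wFn_le γ f x y).trans ?_
            gcongr
            refine (le_abs_self _).trans (hxy.trans ?_)
            gcongr
            linarith
          · linarith [norm_nonneg x]
      _ = γ * L * 2 ^ (s + 1) * (wFn γ f x * (1 + ‖x‖) ^ (s + 1)) * ‖x - y‖ := by
          rw [Real.mul_rpow zero_le_two (by positivity), Real.rpow_add_one two_ne_zero,
            Real.rpow_add_one (by positivity)]
          ring
      _ ≤ (γ * L * 2 ^ (s + 1) + 2) * (wFn γ f x * (1 + ‖x‖) ^ (s + 1)) * ‖x - y‖ := by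
          gcongr
          linarith
  · calc (wFn γ f x - wFn γ f y) * (1 + ‖y‖)
        ≤ wFn γ f x * (2 * (1 + ‖x‖) * ‖x - y‖) := by
          gcongr
          · linarith [wFn_pos γ f y]
          · nlinarith [norm_nonneg x]
      _ = 2 * (wFn γ f x * (1 + ‖x‖) ^ (1 : ℝ)) * ‖x - y‖ := by
          rw [Real.rpow_one]
          ring
      _ ≤ (γ * L * 2 ^ (s + 1) + 2) * (wFn γ f x * (1 + ‖x‖) ^ (s + 1)) * ‖x - y‖ := by
          gcongr
          · exact le_add_of_nonneg_left (by positivity)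
          · exact le_add_of_nonneg_right (norm_nonneg x)
          · exact le_add_of_nonneg_left hs

theorem one_le_pM (hs : 0 ≤ s) (ℓ : ℝ) : 1 ≤ pM s ℓ := by
  unfold pM
  split_ifs <;> linarith

namespace ClassA

theorem continuous (hf : ClassA s ℓ u f) (hs : 0 ≤ s) : Continuous f := by
  obtain ⟨L, -, hlip⟩ := hf.lip
  refine continuous_iff_continuousAt.2 fun x => tendsto_iff_dist_tendsto_zero.2 ?_
  have hbound : Continuous fun y : Rd d => L * (1 + ‖y‖ + ‖x‖) ^ s * ‖y - x‖ := by
    fun_prop (disch := intro; positivity)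
  refine squeeze_zero (fun _ => dist_nonneg) (fun y => hlip y x) ?_
  simpa using hbound.tendsto x

theorem fStar_le (hf : ClassA s ℓ u f) (x : Rd d) : fStar f ≤ f x :=
  csInf_le hf.bddBelow ⟨x, rfl⟩

theorem wFn_le (hf : ClassA s ℓ u f) (hγ : 0 ≤ γ) (x : Rd d) :
    wFn γ f x ≤ Real.exp (-γ * fStar f) :=
  Real.exp_le_exp.2 (mul_le_mul_of_nonpos_left (hf.fStar_le x) (neg_nonpos.2 hγ))

theorem exists_wFn_le_mul_wFn (hf : ClassA s ℓ ℓ f) (hγ : 0 ≤ γ) (hℓ : 0 ≤ ℓ) :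
    ∃ a > 0, ∃ C > 0, ∀ x y, a * ‖y‖ ≤ ‖x‖ → wFn γ f x ≤ C * wFn γ f y := by
  obtain ⟨cl, hcl, Cl, -, hlower⟩ := hf.growth_lower
  obtain ⟨cu, hcu, Cu, -, hupper⟩ := hf.growth_upper
  refine ⟨(cu / cl) ^ ℓ⁻¹, by positivity, Real.exp (γ * (cu + Cu + Cl)), Real.exp_pos _,
    fun x y hxy => ?_⟩
  have hgrowth : cu * ‖y‖ ^ ℓ ≤ cl * ‖x‖ ^ ℓ + cu := by
    rcases hℓ.eq_or_lt with rfl | hℓ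
    · simp [hcl.le]
    calc cu * ‖y‖ ^ ℓ = cl * ((cu / cl) ^ ℓ⁻¹ * ‖y‖) ^ ℓ := by
          rw [Real.mul_rpow (by positivity) (norm_nonneg y),
            Real.rpow_inv_rpow (by positivity) hℓ.ne', ← mul_assoc, mul_div_cancel₀ _ hcl.ne']
      _ ≤ cl * ‖x‖ ^ ℓ := by gcongr
      _ ≤ cl * ‖x‖ ^ ℓ + cu := by linarith
  rw [wFn, wFn, ← Real.exp_add, Real.exp_le_exp]
  have hdiff : f y - f x ≤ cu + Cu + Cl := by linarith [hlower x, hupper y]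
  linarith [mul_le_mul_of_nonneg_left hdiff hγ]

theorem exists_wFn_mul_rpow_le (hf : ClassA s ℓ u f) (hγ : 0 < γ) (hs : 0 ≤ s) (hℓ : 0 ≤ ℓ) :
    ∃ D > 0, ∀ x, wFn γ f x * (1 + ‖x‖) ^ (s + 1) ≤ D * (1 + ‖x‖) ^ (pM s ℓ - 1) := by
  rcases hℓ.eq_or_lt with rfl | hℓ
  · refine ⟨Real.exp (-γ * fStar f), Real.exp_pos _, fun x => ?_⟩
    rw [pM, if_pos rfl, show s + 2 - 1 = s + 1 by ring]
    gcongr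
    exact hf.wFn_le hγ.le x
  obtain ⟨cl, hcl, Cl, -, hlower⟩ := hf.growth_lower
  obtain ⟨D, hD, hdecay⟩ :=
    exists_rpow_le_mul_exp_mul_rpow (mul_pos hγ hcl) hℓ (by positivity : 0 < s + 1)
  refine ⟨D * Real.exp (γ * (Cl - fStar f)), by positivity, fun x => ?_⟩
  rw [pM, if_neg hℓ.ne', sub_self, Real.rpow_zero, mul_one]
  calc wFn γ f x * (1 + ‖x‖) ^ (s + 1)
      ≤ Real.exp (γ * (Cl - fStar f) - γ * cl * ‖x‖ ^ ℓ) *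
          (D * Real.exp (γ * cl * ‖x‖ ^ ℓ)) := by
        gcongr
        · refine Real.exp_le_exp.2 ?_
          linarith [mul_le_mul_of_nonneg_left (hlower x) hγ.le]
        · exact hdecay _ (norm_nonneg x)
    _ = D * Real.exp (γ * (Cl - fStar f)) := by
        rw [Real.exp_sub]
        field_simp

theorem exists_wFn_sub_mul_le (hf : ClassA s ℓ u f) (hγ : 0 < γ) (hs : 0 ≤ s) (hℓ : 0 ≤ ℓ) :
    ∃ C > 0, ∀ x y, (wFn γ f x - wFn γ f y) * (1 + ‖y‖) ≤
      C * (1 + ‖x‖ + ‖y‖) ^ (pM s ℓ - 1) * ‖x - y‖ := by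
  obtain ⟨L, hL, hlip⟩ := hf.lip
  obtain ⟨D, hD, hdecay⟩ := hf.exists_wFn_mul_rpow_le hγ hs hℓ
  refine ⟨(γ * L * 2 ^ (s + 1) + 2) * D, by positivity, fun x y => ?_⟩
  have hq : 0 ≤ pM s ℓ - 1 := sub_nonneg.2 (one_le_pM hs ℓ)
  calc (wFn γ f x - wFn γ f y) * (1 + ‖y‖)
      ≤ (γ * L * 2 ^ (s + 1) + 2) * (wFn γ f x * (1 + ‖x‖) ^ (s + 1)) * ‖x - y‖ :=
        wFn_sub_mul_le hγ.le hs hL.le (hlip y x)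
    _ ≤ (γ * L * 2 ^ (s + 1) + 2) * (D * (1 + ‖x‖) ^ (pM s ℓ - 1)) * ‖x - y‖ := by
        gcongr _ * ?_ * _
        exact hdecay x
    _ ≤ (γ * L * 2 ^ (s + 1) + 2) * D * (1 + ‖x‖ + ‖y‖) ^ (pM s ℓ - 1) * ‖x - y‖ := by
        rw [← mul_assoc]
        gcongr _ * ?_ ^ _ * _
        exact le_add_of_nonneg_right (norm_nonneg y)

theorem exists_wFn_sub_le (hf : ClassA s ℓ u f) (hγ : 0 < γ) (hs : 0 ≤ s) (hℓ : 0 ≤ ℓ) :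
    ∃ C > 0, ∀ x y,
      |wFn γ f x - wFn γ f y| ≤ C * ((1 + ‖x‖ + ‖y‖) ^ (pM s ℓ - 1) * ‖x - y‖) ∧
      ‖wFn γ f x • x - wFn γ f y • y‖ ≤ C * ((1 + ‖x‖ + ‖y‖) ^ (pM s ℓ - 1) * ‖x - y‖) := by
  obtain ⟨C, hC, hdiff⟩ := hf.exists_wFn_sub_mul_le hγ hs hℓ
  obtain ⟨D, hD, hdecay⟩ := hf.exists_wFn_mul_rpow_le hγ hs hℓ
  have hq : 0 ≤ pM s ℓ - 1 := sub_nonneg.2 (one_le_pM hs ℓ)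
  refine ⟨C + D, by positivity, fun x y => ?_⟩
  wlog hxy : wFn γ f y ≤ wFn γ f x generalizing x y with H
  · have hyx := H y x (le_of_not_ge hxy)
    rwa [abs_sub_comm, norm_sub_rev (_ • y), norm_sub_rev y, add_right_comm] at hyx
  set δ := (1 + ‖x‖ + ‖y‖) ^ (pM s ℓ - 1) * ‖x - y‖
  have hdiff' : (wFn γ f x - wFn γ f y) * (1 + ‖y‖) ≤ C * δ :=
    (hdiff x y).trans_eq (mul_assoc _ _ _)
  have hx : wFn γ f x * ‖x - y‖ ≤ D * δ := by
    rw [← mul_assoc]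
    gcongr
    calc wFn γ f x ≤ wFn γ f x * (1 + ‖x‖) ^ (s + 1) :=
          le_mul_of_one_le_right (wFn_pos γ f x).le
            (Real.one_le_rpow (le_add_of_nonneg_right (norm_nonneg x)) (by positivity))
      _ ≤ D * (1 + ‖x‖) ^ (pM s ℓ - 1) := hdecay x
      _ ≤ D * (1 + ‖x‖ + ‖y‖) ^ (pM s ℓ - 1) := by
          gcongr D * ?_ ^ _
          exact le_add_of_nonneg_right (norm_nonneg y)
  have hwxy : 0 ≤ wFn γ f x - wFn γ f y := sub_nonneg.2 hxy
  constructor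
  · rw [abs_of_nonneg hwxy]
    nlinarith [mul_nonneg hwxy (norm_nonneg y), mul_nonneg (wFn_pos γ f x).le (norm_nonneg (x - y))]
  · calc ‖wFn γ f x • x - wFn γ f y • y‖
        = ‖wFn γ f x • (x - y) + (wFn γ f x - wFn γ f y) • y‖ := by
          congr 1
          module
      _ ≤ wFn γ f x * ‖x - y‖ + (wFn γ f x - wFn γ f y) * ‖y‖ :=
          (norm_add_le _ _).trans_eq <| by
            rw [norm_smul_of_nonneg (wFn_pos γ f x).le, norm_smul_of_nonneg hwxy]
      _ ≤ (C + D) * δ := by linarith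

end ClassA

end Weight

section Moments

variable {Ω : Type*} [MeasurableSpace Ω] {π : Measure Ω}

theorem lpNorm_two_sq {E : Type*} [NormedAddCommGroup E] {X : Ω → E} (hX : MemLp X 2 π) :
    lpNorm X 2 π ^ 2 = ∫ ω, ‖X ω‖ ^ 2 ∂π := by
  rw [lpNorm_eq_integral_norm_rpow_toReal two_ne_zero ENNReal.ofNat_ne_top hX.1,
    ENNReal.toReal_ofNat, ← one_div, ← Real.sqrt_eq_rpow]
  simp only [Real.rpow_two]
  exact Real.sq_sqrt (integral_nonneg fun ω => by positivity)

theorem integral_mul_sq_le_mul_integral_sq_mul_integral [IsProbabilityMeasure π] {w r : Ω → ℝ}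
    {a C : ℝ} (hw : Integrable w π) (hr : Integrable (fun ω => r ω ^ 2) π) (hw₀ : 0 ≤ w)
    (hr₀ : 0 ≤ r) (hC : 0 ≤ C) (h : ∀ x y, a * r y ≤ r x → w x ≤ C * w y) :
    ∫ x, w x * r x ^ 2 ∂π ≤ (a ^ 2 + C) * (∫ x, r x ^ 2 ∂π) * ∫ x, w x ∂π := by
  -- Comparing with an independent copy `y` avoids any lower bound on `∫ w`.
  have hpointwise (x y : Ω) : w x * r x ^ 2 ≤ a ^ 2 * r y ^ 2 * w x + C * w y * r x ^ 2 := by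
    have hwx := hw₀ x
    have hwy := hw₀ y
    have hrx := hr₀ x
    simp only [Pi.zero_apply] at hwx hwy hrx
    rcases le_total (a * r y) (r x) with hxy | hxy
    · have hlarge : w x * r x ^ 2 ≤ C * w y * r x ^ 2 := by
        gcongr
        exact h x y hxy
      exact hlarge.trans (le_add_of_nonneg_left (by positivity))
    · have hsmall : w x * r x ^ 2 ≤ w x * (a * r y) ^ 2 := by gcongr
      linarith [show 0 ≤ C * w y * r x ^ 2 by positivity]
  have hinner (y : Ω) : ∫ x, w x * r x ^ 2 ∂π ≤
      a ^ 2 * r y ^ 2 * ∫ x, w x ∂π + C * w y * ∫ x, r x ^ 2 ∂π := by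
    rw [← integral_const_mul, ← integral_const_mul,
      ← integral_add (hw.const_mul _) (hr.const_mul _)]
    exact integral_mono_of_nonneg (.of_forall fun x => mul_nonneg (hw₀ x) (sq_nonneg _))
      ((hw.const_mul _).add (hr.const_mul _)) (.of_forall fun x => hpointwise x y)
  calc ∫ x, w x * r x ^ 2 ∂π
      = ∫ _, ∫ x, w x * r x ^ 2 ∂π ∂π := by simp
    _ ≤ ∫ y, (a ^ 2 * r y ^ 2 * ∫ x, w x ∂π + C * w y * ∫ x, r x ^ 2 ∂π) ∂π :=
        integral_mono (integrable_const _)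
          (((hr.const_mul _).mul_const _).add ((hw.const_mul _).mul_const _)) hinner
    _ = (a ^ 2 + C) * (∫ x, r x ^ 2 ∂π) * ∫ x, w x ∂π := by
        rw [integral_add ((hr.const_mul _).mul_const _) ((hw.const_mul _).mul_const _)]
        simp only [integral_mul_const, integral_const_mul]
        ring

theorem exists_pos_le_integral_of_lpNorm_two_le {E : Type*} [NormedAddCommGroup E] [ProperSpace E]
    {w : E → ℝ} (hw : Continuous w) (hpos : ∀ x, 0 < w x) {T : ℝ} (hT : 0 < T) :
    ∃ m > 0, ∀ (π : Measure Ω) [IsProbabilityMeasure π] (X : Ω → E), MemLp X 2 π →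
      lpNorm X 2 π ≤ T → Integrable (fun ω => w (X ω)) π → m ≤ ∫ ω, w (X ω) ∂π := by
  obtain ⟨x₀, -, hmin⟩ := (isCompact_closedBall (0 : E) (2 * T)).exists_isMinOn
    ⟨0, Metric.mem_closedBall_self (by positivity)⟩ hw.continuousOn
  have hx₀ := hpos x₀
  refine ⟨w x₀ * (3 / 4), by positivity, fun π _ X hX hXT hwX => ?_⟩
  have hX2 : Integrable (fun ω => ‖X ω‖ ^ 2) π := hX.integrable_norm_pow two_ne_zero
  have hpointwise (x : E) : w x₀ * (1 - (4 * T ^ 2)⁻¹ * ‖x‖ ^ 2) ≤ w x := by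
    rcases le_total ‖x‖ (2 * T) with hx | hx
    · have hle : w x₀ ≤ w x := hmin (mem_closedBall_zero_iff.2 hx)
      refine (mul_le_of_le_one_right hx₀.le ?_).trans hle
      exact sub_le_self _ (by positivity)
    · refine (mul_nonpos_of_nonneg_of_nonpos hx₀.le ?_).trans (hpos x).le
      rw [sub_nonpos, inv_mul_eq_div, one_le_div (by positivity)]
      nlinarith
  calc w x₀ * (3 / 4) = w x₀ * (1 - (4 * T ^ 2)⁻¹ * T ^ 2) := by
        field_simp
        norm_num
    _ ≤ w x₀ * (1 - (4 * T ^ 2)⁻¹ * lpNorm X 2 π ^ 2) := by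
        gcongr
        exact lpNorm_nonneg
    _ = ∫ ω, w x₀ * (1 - (4 * T ^ 2)⁻¹ * ‖X ω‖ ^ 2) ∂π := by
        rw [lpNorm_two_sq hX, integral_const_mul,
          integral_sub (integrable_const _) (hX2.const_mul _), integral_const_mul]
        simp
    _ ≤ ∫ ω, w (X ω) ∂π :=
        integral_mono (((integrable_const _).sub (hX2.const_mul _)).const_mul _) hwX
          fun ω => hpointwise (X ω)

theorem eLpNorm_rpow_smul_le {E : Type*} [NormedAddCommGroup E] [NormedSpace ℝ E] {N : Ω → ℝ}
    {D : Ω → E} {q r : ℝ} (hq : 0 ≤ q) (hr : 0 < r) (hN : AEStronglyMeasurable N π)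
    (hD : AEStronglyMeasurable D π) (hN₀ : 0 ≤ N) :
    eLpNorm (fun ω => N ω ^ q • D ω) (.ofReal r) π ≤
      eLpNorm N (.ofReal (r * (q + 1))) π ^ q * eLpNorm D (.ofReal (r * (q + 1))) π := by
  rcases hq.eq_or_lt with rfl | hq
  · simp
  set p := r * (q + 1) with hp
  have hp₀ : 0 < p := by positivity
  have : ENNReal.HolderTriple (.ofReal (p / q)) (.ofReal p) (.ofReal r) := by
    constructor
    rw [← ENNReal.ofReal_inv_of_pos (by positivity), ← ENNReal.ofReal_inv_of_pos hp₀,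
      ← ENNReal.ofReal_inv_of_pos hr, ← ENNReal.ofReal_add (by positivity) (by positivity), hp]
    congr 1
    field_simp
  have hNq : eLpNorm (fun ω => N ω ^ q) (.ofReal (p / q)) π = eLpNorm N (.ofReal p) π ^ q := by
    rw [← div_mul_cancel₀ p hq.ne', ENNReal.ofReal_mul (by positivity), div_mul_cancel₀ p hq.ne',
      ← eLpNorm_norm_rpow N hq]
    simp only [Real.norm_of_nonneg (hN₀ _)]
  rw [← hNq]
  exact eLpNorm_smul_le_mul_eLpNorm hD
    ((Real.continuous_rpow_const hq.le).comp_aestronglyMeasurable hN)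

theorem memLp_rpow_smul {E : Type*} [NormedAddCommGroup E] [NormedSpace ℝ E] {N : Ω → ℝ}
    {D : Ω → E} {q r : ℝ} (hq : 0 ≤ q) (hr : 0 < r) (hN : MemLp N (.ofReal (r * (q + 1))) π)
    (hD : MemLp D (.ofReal (r * (q + 1))) π) (hN₀ : 0 ≤ N) :
    MemLp (fun ω => N ω ^ q • D ω) (.ofReal r) π :=
  ⟨((Real.continuous_rpow_const hq).comp_aestronglyMeasurable hN.1).smul hD.1,
    (eLpNorm_rpow_smul_le hq hr hN.1 hD.1 hN₀).trans_lt
      (ENNReal.mul_lt_top (ENNReal.rpow_lt_top_of_nonneg hq hN.eLpNorm_ne_top) hD.2)⟩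

theorem lpNorm_rpow_smul_le {E : Type*} [NormedAddCommGroup E] [NormedSpace ℝ E] {N : Ω → ℝ}
    {D : Ω → E} {q r : ℝ} (hq : 0 ≤ q) (hr : 0 < r) (hN : MemLp N (.ofReal (r * (q + 1))) π)
    (hD : MemLp D (.ofReal (r * (q + 1))) π) (hN₀ : 0 ≤ N) :
    lpNorm (fun ω => N ω ^ q • D ω) (.ofReal r) π ≤
      lpNorm N (.ofReal (r * (q + 1))) π ^ q * lpNorm D (.ofReal (r * (q + 1))) π := by
  rw [← toReal_eLpNorm (memLp_rpow_smul hq hr hN hD hN₀).1, ← toReal_eLpNorm hN.1,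
    ← toReal_eLpNorm hD.1, ENNReal.toReal_rpow, ← ENNReal.toReal_mul]
  exact ENNReal.toReal_mono (ENNReal.mul_ne_top
    (ENNReal.rpow_ne_top_of_nonneg hq hN.eLpNorm_ne_top) hD.eLpNorm_ne_top)
    (eLpNorm_rpow_smul_le hq hr hN.1 hD.1 hN₀)

theorem lpNorm_le_of_norm_le_mul_rpow_mul [IsProbabilityMeasure π] {E F : Type*}
    [NormedAddCommGroup E] [NormedAddCommGroup F] {X Y : Ω → E} {u : Ω → F} {C q r : ℝ}
    (hq : 0 ≤ q) (hr : 1 ≤ r) (hX : MemLp X (.ofReal (r * (q + 1))) π)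
    (hY : MemLp Y (.ofReal (r * (q + 1))) π)
    (hu : ∀ ω, ‖u ω‖ ≤ C * ((1 + ‖X ω‖ + ‖Y ω‖) ^ q * ‖X ω - Y ω‖)) (hC : 0 ≤ C) :
    lpNorm u (.ofReal r) π ≤
      C * ((1 + lpNorm X (.ofReal (r * (q + 1))) π + lpNorm Y (.ofReal (r * (q + 1))) π) ^ q *
        lpNorm (X - Y) (.ofReal (r * (q + 1))) π) := by
  set p : ℝ≥0∞ := .ofReal (r * (q + 1))
  have hp : 1 ≤ p := ENNReal.one_le_ofReal.2 (by nlinarith)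
  let N : Ω → ℝ := (fun _ => 1) + (fun ω => ‖X ω‖) + fun ω => ‖Y ω‖
  have hone : MemLp (fun _ : Ω => (1 : ℝ)) p π := memLp_const 1
  have hN : MemLp N p π := (hone.add hX.norm).add hY.norm
  have hN₀ : 0 ≤ N := fun ω => by simp only [N, Pi.add_apply, Pi.zero_apply]; positivity
  have hNp : lpNorm N p π ≤ 1 + lpNorm X p π + lpNorm Y p π := by
    calc lpNorm N p π
        ≤ lpNorm (fun _ : Ω => (1 : ℝ)) p π + lpNorm (fun ω => ‖X ω‖) p π +
            lpNorm (fun ω => ‖Y ω‖) p π :=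
          (lpNorm_add_le (hone.add hX.norm) hp).trans (by gcongr; exact lpNorm_add_le hone hp)
      _ = 1 + lpNorm X p π + lpNorm Y p π := by
          rw [lpNorm_norm hX.1, lpNorm_norm hY.1,
            lpNorm_const (zero_lt_one.trans_le hp).ne' (IsProbabilityMeasure.ne_zero π)]
          simp
  have hD : MemLp (fun ω => ‖(X - Y) ω‖) p π := (hX.sub hY).norm
  calc lpNorm u (.ofReal r) π
      ≤ lpNorm (C • fun ω => N ω ^ q • ‖(X - Y) ω‖) (.ofReal r) π :=
        lpNorm_mono_real ((memLp_rpow_smul hq (by positivity) hN hD hN₀).const_smul C) hu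
    _ = C * lpNorm (fun ω => N ω ^ q • ‖(X - Y) ω‖) (.ofReal r) π := by
        rw [lpNorm_const_smul, coe_nnnorm, Real.norm_of_nonneg hC]
    _ ≤ C * (lpNorm N p π ^ q * lpNorm (fun ω => ‖(X - Y) ω‖) p π) := by
        gcongr
        exact lpNorm_rpow_smul_le hq (by positivity) hN hD hN₀
    _ ≤ C * ((1 + lpNorm X p π + lpNorm Y p π) ^ q * lpNorm (X - Y) p π) := by
        rw [lpNorm_norm (hX.sub hY).1]
        gcongr
        exacts [lpNorm_nonneg, lpNorm_nonneg]

end Moments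

section CovarianceFactor

open Matrix

variable {Ω : Type*} [MeasurableSpace Ω] {π : Measure Ω}

theorem inner_toLp_toLp {𝕜 E : Type*} [RCLike 𝕜] [NormedAddCommGroup E] [InnerProductSpace 𝕜 E]
    {u v : Ω → E} (hu : MemLp u 2 π) (hv : MemLp v 2 π) :
    inner 𝕜 (hu.toLp u) (hv.toLp v) = ∫ ω, inner 𝕜 (u ω) (v ω) ∂π := by
  rw [L2.inner_def]
  refine integral_congr_ae ?_
  filter_upwards [hu.coeFn_toLp, hv.coeFn_toLp] with ω hω₁ hω₂
  rw [hω₁, hω₂]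

theorem norm_toLp_eq_lpNorm {E : Type*} [NormedAddCommGroup E] {p : ℝ≥0∞} {u : Ω → E}
    (hu : MemLp u p π) : ‖hu.toLp u‖ = lpNorm u p π := by
  rw [Lp.norm_toLp, toReal_eLpNorm hu.1]

theorem norm_toLp_sub_toLp {E : Type*} [NormedAddCommGroup E] {p : ℝ≥0∞} {u v : Ω → E}
    (hu : MemLp u p π) (hv : MemLp v p π) :
    ‖hu.toLp u - hv.toLp v‖ = lpNorm (u - v) p π := by
  rw [← MemLp.toLp_sub, norm_toLp_eq_lpNorm]

variable {d : ℕ} {β a C : ℝ} {f : Rd d → ℝ} {X : Ω → Rd d}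

theorem integrable_wFn (hv : MemLp (fun ω => wFn (β / 2) f (X ω)) 2 π) :
    Integrable (fun ω => wFn β f (X ω)) π := by
  simpa only [norm_wFn_half_sq] using hv.integrable_norm_pow two_ne_zero

variable (hv : MemLp (fun ω => wFn (β / 2) f (X ω)) 2 π)
  (hb : ∀ i, MemLp (fun ω => wFn (β / 2) f (X ω) * X ω i) 2 π)

/-- Vectors in `L²(π)` whose Gram matrix is `C_β` of the law of `X`, see `wCov_map_eq_gram`. -/
def covFactor (i : Fin d) : Lp ℝ 2 π :=
  normalizedResidual (hv.toLp _) ((hb i).toLp _)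

theorem norm_toLp_wFn_sq : ‖hv.toLp _‖ ^ 2 = ∫ ω, wFn β f (X ω) ∂π := by
  simp only [norm_toLp_eq_lpNorm, lpNorm_two_sq hv, norm_wFn_half_sq]

theorem sum_norm_toLp_wFn_mul_sq :
    ∑ i, ‖(hb i).toLp _‖ ^ 2 = ∫ ω, wFn β f (X ω) * ‖X ω‖ ^ 2 ∂π := by
  simp only [norm_toLp_eq_lpNorm, lpNorm_two_sq (hb _)]
  rw [← integral_finsetSum _ fun i _ => (hb i).integrable_norm_pow two_ne_zero]
  simp only [EuclideanSpace.norm_sq_eq, norm_mul, mul_pow, ← Finset.mul_sum, norm_wFn_half_sq]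

theorem wMean_map_apply (hf : Measurable f) (hX : AEMeasurable X π) (i : Fin d) :
    wMean β f (π.map X) i =
      (‖hv.toLp _‖ ^ 2)⁻¹ * inner ℝ (hv.toLp _) ((hb i).toLp _) := by
  have hw : Measurable (wFn β f) := by unfold wFn; fun_prop
  have hsplit (ω : Ω) (i : Fin d) :
      wFn (β / 2) f (X ω) * (wFn (β / 2) f (X ω) * X ω i) = (wFn β f (X ω) • X ω) i := by
    rw [← mul_assoc, wFn_half_mul_self, PiLp.smul_apply, smul_eq_mul]
  rw [norm_toLp_wFn_sq, inner_toLp_toLp, wMean, PiLp.smul_apply, smul_eq_mul,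
    integral_map hX (by fun_prop), integral_map hX (by fun_prop), eval_integral_piLp]
  · simp only [RCLike.inner_apply, conj_trivial, mul_comm _ (wFn (β / 2) f _), hsplit]
  · exact fun i => (hv.integrable_mul (hb i)).congr (.of_forall fun ω => hsplit ω i)

theorem covFactor_eq_smul_toLp (hf : Measurable f) (hX : AEMeasurable X π) (i : Fin d) :
    covFactor hv hb i = ‖hv.toLp _‖⁻¹ •
      ((hb i).sub (hv.const_smul (wMean β f (π.map X) i))).toLp _ := by
  rw [covFactor, normalizedResidual_eq_smul_sub, ← wMean_map_apply hv hb hf hX,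
    MemLp.toLp_sub (hb i) (hv.const_smul _), MemLp.toLp_const_smul _ hv]

theorem wCov_map_eq_gram (hf : Measurable f) (hX : AEMeasurable X π) :
    wCov β f (π.map X) = gram ℝ (covFactor hv hb) := by
  have hw : Measurable (wFn β f) := by unfold wFn; fun_prop
  ext i j
  rw [gram_apply, covFactor_eq_smul_toLp hv hb hf hX, covFactor_eq_smul_toLp hv hb hf hX,
    real_inner_smul_left, real_inner_smul_right, inner_toLp_toLp, ← mul_assoc, ← sq, inv_pow,
    norm_toLp_wFn_sq, wCov, integral_map hX (by fun_prop), integral_map hX (by fun_prop)]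
  congr 2 with ω
  simp only [Pi.sub_apply, Pi.smul_apply, smul_eq_mul, ← wFn_half_mul_self β f]
  simp
  ring

theorem inv_norm_mul_norm_toLp_le [IsProbabilityMeasure π] (hX : MemLp X 2 π) (hC : 0 ≤ C)
    (h : ∀ x y, a * ‖y‖ ≤ ‖x‖ → wFn β f x ≤ C * wFn β f y) (i : Fin d) :
    ‖hv.toLp _‖⁻¹ * ‖(hb i).toLp _‖ ≤ √(a ^ 2 + C) * lpNorm X 2 π := by
  have hmom := integral_mul_sq_le_mul_integral_sq_mul_integral (integrable_wFn hv)
    (hX.integrable_norm_pow two_ne_zero) (fun ω => (wFn_pos β f (X ω)).le)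
    (fun ω => norm_nonneg (X ω)) hC fun ω₁ ω₂ => h (X ω₁) (X ω₂)
  rw [← lpNorm_two_sq hX, ← norm_toLp_wFn_sq hv, ← sum_norm_toLp_wFn_mul_sq hb] at hmom
  have hX₀ : 0 ≤ lpNorm X 2 π := lpNorm_nonneg
  have hbound : ‖(hb i).toLp _‖ ≤ √(a ^ 2 + C) * lpNorm X 2 π * ‖hv.toLp _‖ := by
    refine abs_le_of_sq_le_sq' ?_ (by positivity) |>.2
    rw [mul_pow, mul_pow, Real.sq_sqrt (by positivity)]
    exact (Finset.single_le_sum (f := fun j => ‖(hb j).toLp _‖ ^ 2) (fun j _ => sq_nonneg _)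
      (Finset.mem_univ i)).trans hmom
  exact inv_mul_le_of_le_mul₀ (norm_nonneg _) (by positivity) (by rwa [mul_comm])

theorem norm_covFactor_le [IsProbabilityMeasure π] (hX : MemLp X 2 π) (hC : 0 ≤ C)
    (h : ∀ x y, a * ‖y‖ ≤ ‖x‖ → wFn β f x ≤ C * wFn β f y) (i : Fin d) :
    ‖covFactor hv hb i‖ ≤ √(a ^ 2 + C) * lpNorm X 2 π :=
  (norm_normalizedResidual_le _ _).trans (inv_norm_mul_norm_toLp_le hv hb hX hC h i)

end CovarianceFactor

section Coupling

variable {Ω : Type*} [MeasurableSpace Ω] {d : ℕ} {β γ s ℓ u p R : ℝ} {f : Rd d → ℝ}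

theorem lpNorm_le_lpNorm_of_exponent_le {π : Measure Ω} [IsProbabilityMeasure π] {E : Type*}
    [NormedAddCommGroup E] {X : Ω → E} {p r : ℝ≥0∞} (hpr : p ≤ r) (hX : MemLp X r π) :
    lpNorm X p π ≤ lpNorm X r π := by
  rw [← toReal_eLpNorm hX.1, ← toReal_eLpNorm hX.1]
  exact ENNReal.toReal_mono hX.eLpNorm_ne_top (eLpNorm_le_eLpNorm_of_exponent_le hpr hX.1)

theorem two_le_ofReal_of_two_mul_pM_le (hs : 0 ≤ s) (hp : 2 * pM s ℓ ≤ p) :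
    (2 : ℝ≥0∞) ≤ .ofReal p := by
  rw [← ENNReal.ofReal_ofNat]
  exact ENNReal.ofReal_le_ofReal (by linarith [one_le_pM hs ℓ])

namespace ClassA

theorem memLp_wFn (hf : ClassA s ℓ u f) (hs : 0 ≤ s) (hγ : 0 ≤ γ) {π : Measure Ω}
    [IsFiniteMeasure π] {X : Ω → Rd d} (hX : AEStronglyMeasurable X π) (p : ℝ≥0∞) :
    MemLp (fun ω => wFn γ f (X ω)) p π :=
  .of_bound ((continuous_wFn (hf.continuous hs)).comp_aestronglyMeasurable hX) _ <|
    .of_forall fun ω => (Real.norm_of_nonneg (wFn_pos γ f _).le).trans_le (hf.wFn_le hγ (X ω))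

theorem memLp_wFn_mul_apply (hf : ClassA s ℓ u f) (hs : 0 ≤ s) (hγ : 0 ≤ γ) {π : Measure Ω}
    {X : Ω → Rd d} {p : ℝ≥0∞} (hX : MemLp X p π) (i : Fin d) :
    MemLp (fun ω => wFn γ f (X ω) * X ω i) p π := by
  have hw := continuous_wFn (γ := γ) (hf.continuous hs)
  refine (hX.eval_piLp i).of_le_mul (c := Real.exp (-γ * fStar f))
    ((hw.comp_aestronglyMeasurable hX.1).mul (hX.eval_piLp i).1) (.of_forall fun ω => ?_)
  rw [norm_mul, Real.norm_of_nonneg (wFn_pos γ f _).le]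
  gcongr
  exact hf.wFn_le hγ (X ω)

theorem exists_lpNorm_wFn_sub_le (hf : ClassA s ℓ u f) (hγ : 0 < γ) (hs : 0 ≤ s) (hℓ : 0 ≤ ℓ)
    (hp : 2 * pM s ℓ ≤ p) (hR : 0 ≤ R) :
    ∃ C > 0, ∀ (π : Measure Ω) [IsProbabilityMeasure π] (X Y : Ω → Rd d),
      MemLp X (.ofReal p) π → MemLp Y (.ofReal p) π →
      lpNorm X (.ofReal p) π ≤ R → lpNorm Y (.ofReal p) π ≤ R →
      lpNorm (fun ω => wFn γ f (X ω) - wFn γ f (Y ω)) 2 π ≤ C * lpNorm (X - Y) (.ofReal p) π ∧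
      ∀ i, lpNorm (fun ω => wFn γ f (X ω) * X ω i - wFn γ f (Y ω) * Y ω i) 2 π ≤
        C * lpNorm (X - Y) (.ofReal p) π := by
  obtain ⟨q, rfl⟩ : ∃ q, p = 2 * (q + 1) := ⟨p / 2 - 1, by ring⟩
  have hqM : pM s ℓ - 1 ≤ q := by linarith
  have hq : 0 ≤ q := by linarith [one_le_pM hs ℓ]
  obtain ⟨C, hC, hpointwise⟩ := hf.exists_wFn_sub_le hγ hs hℓ
  refine ⟨C * (1 + R + R) ^ q, by positivity, fun π _ X Y hX hY hXR hYR => ?_⟩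
  have hbound {E : Type} [NormedAddCommGroup E] (v : Ω → E)
      (hv : ∀ ω, ‖v ω‖ ≤ C * ((1 + ‖X ω‖ + ‖Y ω‖) ^ (pM s ℓ - 1) * ‖X ω - Y ω‖)) :
      lpNorm v 2 π ≤ C * (1 + R + R) ^ q * lpNorm (X - Y) (.ofReal (2 * (q + 1))) π := by
    have hv' (ω : Ω) : ‖v ω‖ ≤ C * ((1 + ‖X ω‖ + ‖Y ω‖) ^ q * ‖X ω - Y ω‖) := by
      refine (hv ω).trans ?_
      gcongr
      linarith [norm_nonneg (X ω), norm_nonneg (Y ω)]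
    have h := lpNorm_le_of_norm_le_mul_rpow_mul hq one_le_two hX hY hv' hC.le
    rw [ENNReal.ofReal_ofNat] at h
    refine h.trans ?_
    rw [mul_assoc]
    gcongr
    exacts [lpNorm_nonneg, add_nonneg (add_nonneg zero_le_one lpNorm_nonneg) lpNorm_nonneg]
  refine ⟨hbound _ fun ω => (hpointwise _ _).1, fun i => hbound _ fun ω => ?_⟩
  exact (PiLp.norm_apply_le (wFn γ f (X ω) • X ω - wFn γ f (Y ω) • Y ω) i).trans
    (hpointwise _ _).2

theorem exists_norm_covFactor_sub_le_of_lpNorm_le (hf : ClassA s ℓ ℓ f) (hβ : 0 < β) (hs : 0 ≤ s)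
    (hℓ : 0 ≤ ℓ) (hp : 2 * pM s ℓ ≤ p) (hR : 0 < R) :
    ∃ L > 0, ∀ (π : Measure Ω) [IsProbabilityMeasure π] (X Y : Ω → Rd d)
      (hvX : MemLp (fun ω => wFn (β / 2) f (X ω)) 2 π)
      (hbX : ∀ i, MemLp (fun ω => wFn (β / 2) f (X ω) * X ω i) 2 π)
      (hvY : MemLp (fun ω => wFn (β / 2) f (Y ω)) 2 π)
      (hbY : ∀ i, MemLp (fun ω => wFn (β / 2) f (Y ω) * Y ω i) 2 π),
      MemLp X (.ofReal p) π → MemLp Y (.ofReal p) π →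
      lpNorm X (.ofReal p) π ≤ R → lpNorm Y (.ofReal p) π ≤ R →
      ∀ i, ‖covFactor hvX hbX i - covFactor hvY hbY i‖ ≤ L * lpNorm (X - Y) (.ofReal p) π := by
  obtain ⟨C, hC, hLip⟩ := exists_lpNorm_wFn_sub_le (Ω := Ω) hf (half_pos hβ) hs hℓ hp hR.le
  obtain ⟨a, -, K, hK, hcomp⟩ := hf.exists_wFn_le_mul_wFn hβ.le hℓ
  obtain ⟨m, hm, hmass⟩ := exists_pos_le_integral_of_lpNorm_two_le (Ω := Ω)
    (continuous_wFn (γ := β) (hf.continuous hs)) (wFn_pos β f) hR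
  have h2p := two_le_ofReal_of_two_mul_pM_le hs hp
  have hsqrt {π : Measure Ω} [IsProbabilityMeasure π] {X : Ω → Rd d}
      (hv : MemLp (fun ω => wFn (β / 2) f (X ω)) 2 π) (hX : MemLp X (.ofReal p) π)
      (hXR : lpNorm X (.ofReal p) π ≤ R) : √m ≤ ‖hv.toLp _‖ := by
    refine Real.sqrt_le_iff.2 ⟨norm_nonneg _, ?_⟩
    rw [norm_toLp_wFn_sq]
    exact hmass π X (hX.mono_exponent h2p) ((lpNorm_le_lpNorm_of_exponent_le h2p hX).trans hXR)
      (integrable_wFn hv)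
  refine ⟨(√m)⁻¹ * (C + 5 * (√(a ^ 2 + K) * R) * C), by positivity,
    fun π _ X Y hvX hbX hvY hbY hX hY hXR hYR i => ?_⟩
  obtain ⟨hvLip, hbLip⟩ := hLip π X Y hX hY hXR hYR
  have hm' : 0 < √m := Real.sqrt_pos.2 hm
  have hratio : ‖hvX.toLp _‖⁻¹ * ‖(hbX i).toLp _‖ ≤ √(a ^ 2 + K) * R := by
    refine (inv_norm_mul_norm_toLp_le hvX hbX (hX.mono_exponent h2p) hK.le hcomp i).trans ?_
    gcongr
    exact (lpNorm_le_lpNorm_of_exponent_le h2p hX).trans hXR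
  calc ‖covFactor hvX hbX i - covFactor hvY hbY i‖
      ≤ ‖hvY.toLp _‖⁻¹ * (‖(hbX i).toLp _ - (hbY i).toLp _‖ +
          5 * (‖hvX.toLp _‖⁻¹ * ‖(hbX i).toLp _‖) * ‖hvX.toLp _ - hvY.toLp _‖) :=
        norm_normalizedResidual_sub_le (norm_pos_iff.1 (hm'.trans_le (hsqrt hvX hX hXR)))
          (norm_pos_iff.1 (hm'.trans_le (hsqrt hvY hY hYR))) _ _
    _ ≤ (√m)⁻¹ * (C * lpNorm (X - Y) (.ofReal p) π +
          5 * (√(a ^ 2 + K) * R) * (C * lpNorm (X - Y) (.ofReal p) π)) := by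
        gcongr
        · exact hsqrt hvY hY hYR
        · exact (norm_toLp_sub_toLp _ _).trans_le (hbLip i)
        · exact (norm_toLp_sub_toLp _ _).trans_le hvLip
    _ = (√m)⁻¹ * (C + 5 * (√(a ^ 2 + K) * R) * C) * lpNorm (X - Y) (.ofReal p) π := by ring

theorem exists_norm_covFactor_sub_le (hf : ClassA s ℓ ℓ f) (hβ : 0 < β) (hs : 0 ≤ s)
    (hℓ : 0 ≤ ℓ) (hp : 2 * pM s ℓ ≤ p) (hR : 0 < R) :
    ∃ L > 0, ∀ (π : Measure Ω) [IsProbabilityMeasure π] (X Y : Ω → Rd d)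
      (hvX : MemLp (fun ω => wFn (β / 2) f (X ω)) 2 π)
      (hbX : ∀ i, MemLp (fun ω => wFn (β / 2) f (X ω) * X ω i) 2 π)
      (hvY : MemLp (fun ω => wFn (β / 2) f (Y ω)) 2 π)
      (hbY : ∀ i, MemLp (fun ω => wFn (β / 2) f (Y ω) * Y ω i) 2 π),
      MemLp X (.ofReal p) π → MemLp Y (.ofReal p) π → lpNorm X (.ofReal p) π ≤ R →
      ∀ i, ‖covFactor hvX hbX i - covFactor hvY hbY i‖ ≤ L * lpNorm (X - Y) (.ofReal p) π := by
  obtain ⟨A, hA, hlocal⟩ := exists_norm_covFactor_sub_le_of_lpNorm_le (Ω := Ω) hf hβ hs hℓ hp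
    (add_pos hR one_pos)
  obtain ⟨a, -, K, hK, hcomp⟩ := hf.exists_wFn_le_mul_wFn hβ.le hℓ
  have h2p := two_le_ofReal_of_two_mul_pM_le hs hp
  refine ⟨max A (√(a ^ 2 + K) * (2 * R + 1)), by positivity,
    fun π _ X Y hvX hbX hvY hbY hX hY hXR i => ?_⟩
  have hYR : lpNorm Y (.ofReal p) π ≤ R + lpNorm (X - Y) (.ofReal p) π :=
    (lpNorm_le_lpNorm_add_lpNorm_sub hX (one_le_two.trans h2p)).trans (by gcongr)
  rcases le_total (lpNorm (X - Y) (.ofReal p) π) 1 with hnear | hfar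
  · refine (hlocal π X Y hvX hbX hvY hbY hX hY (by linarith) (by linarith) i).trans ?_
    gcongr
    exacts [lpNorm_nonneg, le_max_left _ _]
  · calc ‖covFactor hvX hbX i - covFactor hvY hbY i‖
        ≤ √(a ^ 2 + K) * lpNorm X 2 π + √(a ^ 2 + K) * lpNorm Y 2 π :=
          (norm_sub_le _ _).trans <| add_le_add
            (norm_covFactor_le hvX hbX (hX.mono_exponent h2p) hK.le hcomp i)
            (norm_covFactor_le hvY hbY (hY.mono_exponent h2p) hK.le hcomp i)
      _ ≤ √(a ^ 2 + K) * R + √(a ^ 2 + K) * (R + lpNorm (X - Y) (.ofReal p) π) := by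
          gcongr
          exacts [(lpNorm_le_lpNorm_of_exponent_le h2p hX).trans hXR,
            (lpNorm_le_lpNorm_of_exponent_le h2p hY).trans hYR]
      _ = √(a ^ 2 + K) * (2 * R * 1 + lpNorm (X - Y) (.ofReal p) π) := by ring
      _ ≤ √(a ^ 2 + K) * (2 * R * lpNorm (X - Y) (.ofReal p) π +
            lpNorm (X - Y) (.ofReal p) π) := by gcongr
      _ = √(a ^ 2 + K) * (2 * R + 1) * lpNorm (X - Y) (.ofReal p) π := by ring
      _ ≤ max A (√(a ^ 2 + K) * (2 * R + 1)) * lpNorm (X - Y) (.ofReal p) π := by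
          gcongr
          exact le_max_right _ _

theorem exists_frobNorm_sub_le_lpNorm (hf : ClassA s ℓ ℓ f) (hβ : 0 < β) (hs : 0 ≤ s)
    (hℓ : 0 ≤ ℓ) (hp : 2 * pM s ℓ ≤ p) (hR : 0 < R) :
    ∃ L > 0, ∀ (π : Measure Ω) [IsProbabilityMeasure π] (X Y : Ω → Rd d),
      MemLp X (.ofReal p) π → MemLp Y (.ofReal p) π → lpNorm X (.ofReal p) π ≤ R →
      ∀ S T, IsPSDSqrt S (wCov β f (π.map X)) → IsPSDSqrt T (wCov β f (π.map Y)) →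
      frobNorm (S - T) ≤ L * lpNorm (X - Y) (.ofReal p) π := by
  obtain ⟨L, hL, hLip⟩ := exists_norm_covFactor_sub_le (Ω := Ω) hf hβ hs hℓ hp hR
  refine ⟨√(2 * d) * L + 1, by positivity, fun π _ X Y hX hY hXR S T hS hT => ?_⟩
  have h2p := two_le_ofReal_of_two_mul_pM_le hs hp
  have hmeas : Measurable f := (hf.continuous hs).measurable
  have hvX := hf.memLp_wFn hs (half_pos hβ).le hX.1 2
  have hvY := hf.memLp_wFn hs (half_pos hβ).le hY.1 2
  have hbX := hf.memLp_wFn_mul_apply hs (half_pos hβ).le (hX.mono_exponent h2p)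
  have hbY := hf.memLp_wFn_mul_apply hs (half_pos hβ).le (hY.mono_exponent h2p)
  rw [wCov_map_eq_gram hvX hbX hmeas hX.1.aemeasurable] at hS
  rw [wCov_map_eq_gram hvY hbY hmeas hY.1.aemeasurable] at hT
  have hδ : 0 ≤ lpNorm (X - Y) (.ofReal p) π := lpNorm_nonneg
  calc frobNorm (S - T)
      ≤ √(2 * ∑ i, ‖covFactor hvX hbX i - covFactor hvY hbY i‖ ^ 2) :=
        frobNorm_sub_le_of_gram hS hT
    _ ≤ √(2 * ∑ _i : Fin d, (L * lpNorm (X - Y) (.ofReal p) π) ^ 2) := by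
        gcongr with i
        exact hLip π X Y hvX hbX hvY hbY hX hY hXR i
    _ = √(2 * d) * L * lpNorm (X - Y) (.ofReal p) π := by
        rw [Finset.sum_const, Finset.card_fin, nsmul_eq_mul, ← mul_assoc,
          Real.sqrt_mul (by positivity), Real.sqrt_sq (by positivity), mul_assoc]
    _ ≤ (√(2 * d) * L + 1) * lpNorm (X - Y) (.ofReal p) π := by
        gcongr
        linarith

end ClassA

end Coupling

section Wasserstein

theorem eLpNorm_ofReal_eq_lintegral {α E : Type*} [MeasurableSpace α] [NormedAddCommGroup E]
    {π : Measure α} {p : ℝ} (hp : 0 < p) (u : α → E) :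
    eLpNorm u (.ofReal p) π = (∫⁻ x, (‖u x‖₊ : ℝ≥0∞) ^ p ∂π) ^ (1 / p) := by
  rw [eLpNorm_eq_lintegral_rpow_enorm_toReal (ENNReal.ofReal_ne_zero_iff.2 hp)
    ENNReal.ofReal_ne_top, ENNReal.toReal_ofReal hp.le]
  rfl

variable {d : ℕ} {p R : ℝ} {μ ν : Measure (Rd d)}

theorem MomFin.memLp_id (h : MomFin p μ) (hp : 0 < p) : MemLp id (.ofReal p) μ := by
  refine ⟨aestronglyMeasurable_id, ?_⟩
  rw [eLpNorm_ofReal_eq_lintegral hp]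
  exact ENNReal.rpow_lt_top_of_nonneg (by positivity) h.ne

theorem MomLE.momFin (h : MomLE p R μ) : MomFin p μ :=
  h.trans_lt ENNReal.ofReal_lt_top

theorem MomLE.lpNorm_id_le (h : MomLE p R μ) (hp : 0 < p) (hR : 0 ≤ R) :
    lpNorm id (.ofReal p) μ ≤ R := by
  rw [← toReal_eLpNorm aestronglyMeasurable_id, eLpNorm_ofReal_eq_lintegral hp]
  refine ENNReal.toReal_le_of_le_ofReal hR ((ENNReal.rpow_le_rpow h (by positivity)).trans_eq ?_)
  rw [ENNReal.ofReal_rpow_of_nonneg (by positivity) (by positivity), one_div,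
    Real.rpow_rpow_inv hR hp.ne']

theorem le_Wp [IsProbabilityMeasure μ] [IsProbabilityMeasure ν] {r : ℝ} (hp : 0 < p)
    (hμ : MemLp id (.ofReal p) μ) (hν : MemLp id (.ofReal p) ν)
    (h : ∀ (π : Measure (Rd d × Rd d)) [IsProbabilityMeasure π],
      π.map Prod.fst = μ → π.map Prod.snd = ν →
      r ≤ lpNorm (Prod.fst - Prod.snd) (.ofReal p) π) :
    r ≤ Wp p μ ν := by
  refine (ENNReal.ofReal_le_iff_le_toReal ?_).1 (le_sInf ?_)
  · refine ne_top_of_le_ne_top ?_ (sInf_le ⟨μ.prod ν, by simp, by simp, rfl⟩)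
    rw [← eLpNorm_ofReal_eq_lintegral hp fun z : Rd d × Rd d => z.1 - z.2]
    exact ((hμ.comp_measurePreserving measurePreserving_fst).sub
      (hν.comp_measurePreserving measurePreserving_snd)).eLpNorm_ne_top
  · rintro _ ⟨π, hfst, hsnd, rfl⟩
    have : IsProbabilityMeasure (π.map Prod.fst) := hfst ▸ ‹_›
    have : IsProbabilityMeasure π := Measure.isProbabilityMeasure_of_map Prod.fst
    rw [← eLpNorm_ofReal_eq_lintegral hp fun z : Rd d × Rd d => z.1 - z.2]
    refine ENNReal.ofReal_le_of_le_toReal ((h π hfst hsnd).trans_eq ?_)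
    exact (toReal_eLpNorm (by fun_prop)).symm

end Wasserstein

/-- **Improved Wasserstein stability estimate for the square root of the weighted covariance.**
If `f ∈ A(s, ℓ, ℓ)`, then for every `R > 0` and `p ≥ 2 p_M(s, ℓ)` there is `L̃ > 0`
such that `‖√C_β(μ) - √C_β(ν)‖_F ≤ L̃ ⬝ W_p(μ, ν)` for all `μ ∈ P_{p,R}(ℝ^d)` and
`ν ∈ P_p(ℝ^d)`. -/
theorem sqrt_weighted_cov_stability_improved
    (β : ℝ) (hβ : 0 < β) (d : ℕ) (hd : 1 ≤ d)
    (s ℓ : ℝ) (hs : 0 ≤ s) (hℓ : 0 ≤ ℓ)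
    (f : Rd d → ℝ) (hf : ClassA s ℓ ℓ f)
    (R : ℝ) (hR : 0 < R) (p : ℝ) (hp : 2 * pM s ℓ ≤ p) :
    ∃ L > 0, ∀ μ ν : Measure (Rd d),
      IsProbabilityMeasure μ → IsProbabilityMeasure ν →
      MomLE p R μ → MomFin p ν →
      ∀ Sμ Sν : Matrix (Fin d) (Fin d) ℝ,
        IsPSDSqrt Sμ (wCov β f μ) → IsPSDSqrt Sν (wCov β f ν) →
        frobNorm (Sμ - Sν) ≤ L * Wp p μ ν := by
  have hp₀ : 0 < p := by linarith [one_le_pM hs ℓ]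
  obtain ⟨L, hL, hLip⟩ := hf.exists_frobNorm_sub_le_lpNorm (Ω := Rd d × Rd d) hβ hs hℓ hp hR
  refine ⟨L, hL, fun μ ν _ _ hμR hνp Sμ Sν hSμ hSν => ?_⟩
  have hμ := hμR.momFin.memLp_id hp₀
  have hν := hνp.memLp_id hp₀
  rw [← div_le_iff₀' hL]
  refine le_Wp hp₀ hμ hν fun π _ hfst hsnd => ?_
  subst hfst hsnd
  rw [div_le_iff₀' hL]
  refine hLip π Prod.fst Prod.snd (hμ.comp_measurePreserving ⟨measurable_fst, rfl⟩)
    (hν.comp_measurePreserving ⟨measurable_snd, rfl⟩) ?_ Sμ Sν hSμ hSν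
  have hR' := hμR.lpNorm_id_le hp₀ hR.le
  rwa [← toReal_eLpNorm hμ.1, eLpNorm_map_measure hμ.1 measurable_fst.aemeasurable,
    toReal_eLpNorm (by fun_prop)] at hR'

end
end

section
/- Fix β > 0, d ≥ 1 and a positive integer J, and let f : ℝ^d → ℝ be locally Lipschitz continuous. Then for each R > 0 there exists a constant C = C(J, R) > 0 such that for all X, Y ∈ (ℝ^d)^J with |X| ≤ R and |Y| ≤ R, it holds that |M_β(X) − M_β(Y)| ≤ C |X − Y| and ‖√C_β(X) − √C_β(Y)‖_F ≤ C |X − Y|. -/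
open MeasureTheory ENNReal
open scoped NNReal

noncomputable section

/-- The weight `w_j(X) = e^{-β f(X^j)} / ∑_k e^{-β f(X^k)}` of the `j`-th particle. -/
def pWeight (β : ℝ) {d J : ℕ} (f : Rd d → ℝ) (X : Fin J → Rd d) (j : Fin J) : ℝ :=
  Real.exp (-β * f (X j)) / ∑ k, Real.exp (-β * f (X k))

/-- The weighted mean `M_β(X) = ∑_j w_j(X) X^j` of a particle ensemble. -/
def pMean (β : ℝ) {d J : ℕ} (f : Rd d → ℝ) (X : Fin J → Rd d) : Rd d :=
  ∑ j, pWeight β f X j • X j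

/-- The weighted covariance `C_β(X) = ∑_j w_j(X) (X^j - M_β(X))(X^j - M_β(X))ᵀ`. -/
def pCov (β : ℝ) {d J : ℕ} (f : Rd d → ℝ) (X : Fin J → Rd d) :
    Matrix (Fin d) (Fin d) ℝ := fun i i' =>
  ∑ j, pWeight β f X j * ((X j i - pMean β f X i) * (X j i' - pMean β f X i'))

/-- The Euclidean norm `|X| = (∑_j |X^j|²)^{1/2}` of a particle ensemble. -/
def tupleNorm {d J : ℕ} (X : Fin J → Rd d) : ℝ := Real.sqrt (∑ j, ‖X j‖ ^ 2)

/-!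
The mean `M` and the vectors `√w_j (X^j - M)` are smooth functions of the particles `X^j` and of
the positive numbers `e^{-β f (X^j)}`, so they are locally Lipschitz in `X`, hence Lipschitz on
balls. The square root of a matrix is not Lipschitz near singular matrices, but the covariance is
`D Dᵀ`, where `D` has the columns `√w_j (X^j - M)`, and `D ↦ √(D Dᵀ)` is `√2`-Lipschitz for the
Frobenius norm: `√(D Dᵀ)` is a diagonal block of `|H|` for the Hermitian matrix
`H = [[0, D], [Dᵀ, 0]]`, and `H ↦ |H|` is `1`-Lipschitz on Hermitian matrices, because
`|H| ± H ≥ 0` and `|K| ± K ≥ 0` give `tr (H K) ≤ tr (|H| |K|)`, while `tr (H²) = tr (|H|²)`.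
-/

section LocallyLipschitz

lemma locallyLipschitz_pi {α ι : Type*} [PseudoEMetricSpace α] [Fintype ι] {β : ι → Type*}
    [∀ i, PseudoEMetricSpace (β i)] {g : α → ∀ i, β i}
    (hg : ∀ i, LocallyLipschitz fun x => g x i) : LocallyLipschitz g := by
  intro x
  choose K t ht hK using fun i => hg i x
  refine ⟨Finset.univ.sup K, ⋂ i, t i, Filter.iInter_mem.2 ht, fun y hy z hz => ?_⟩
  refine edist_pi_le_iff.2 fun i =>
    (hK i (Set.mem_iInter.1 hy i) (Set.mem_iInter.1 hz i)).trans ?_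
  gcongr
  exact Finset.le_sup (Finset.mem_univ i)

lemma locallyLipschitz_comp_of_contDiffAt {α E F : Type*} [PseudoEMetricSpace α]
    [NormedAddCommGroup E] [NormedSpace ℝ E] [NormedAddCommGroup F] [NormedSpace ℝ F]
    {g : α → E} {G : E → F} (hg : LocallyLipschitz g) (hG : ∀ x, ContDiffAt ℝ 1 G (g x)) :
    LocallyLipschitz (G ∘ g) := by
  intro x
  obtain ⟨K, s, hs, hK⟩ := (hG x).exists_lipschitzOnWith
  obtain ⟨L, t, ht, hL⟩ := hg x
  exact ⟨K * L, t ∩ g ⁻¹' s, Filter.inter_mem ht (hg.continuous.continuousAt hs),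
    hK.comp (hL.mono Set.inter_subset_left) fun _ hy => hy.2⟩

lemma exists_norm_sub_le_of_locallyLipschitz {V W : Type*}
    [SeminormedAddCommGroup V] [ProperSpace V] [SeminormedAddCommGroup W]
    {g : V → W} (hg : LocallyLipschitz g) (R : ℝ) :
    ∃ C > 0, ∀ x y, ‖x‖ ≤ R → ‖y‖ ≤ R → ‖g x - g y‖ ≤ C * ‖x - y‖ := by
  obtain ⟨K, hK⟩ := (hg.locallyLipschitzOn (s := Metric.closedBall 0 R))
    |>.exists_lipschitzOnWith_of_compact (isCompact_closedBall _ _)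
  refine ⟨K + 1, by positivity, fun x y hx hy => ?_⟩
  calc ‖g x - g y‖ ≤ K * ‖x - y‖ := hK.norm_sub_le (by simpa using hx) (by simpa using hy)
    _ ≤ (K + 1) * ‖x - y‖ := by gcongr; simp

end LocallyLipschitz

section Frobenius

open Matrix
open scoped MatrixOrder ComplexOrder Matrix.Norms.Frobenius

variable {𝕜 m n : Type*} [RCLike 𝕜] [Fintype m] [Fintype n]

lemma frobenius_norm_sq (A : Matrix m n 𝕜) : ‖A‖ ^ 2 = ∑ i, ∑ j, ‖A i j‖ ^ 2 := by
  rw [frobenius_norm_def, ← Real.rpow_natCast, ← Real.rpow_mul (by positivity)]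
  norm_num

lemma frobenius_norm_sq_eq_re_trace (A : Matrix m n 𝕜) : ‖A‖ ^ 2 = RCLike.re (Aᴴ * A).trace := by
  rw [frobenius_norm_sq, Finset.sum_comm]
  simp only [trace, diag_apply, mul_apply, conjTranspose_apply, RCLike.star_def, RCLike.conj_mul,
    map_sum, RCLike.re_ofReal_pow]

lemma frobenius_norm_sub_sq {A B : Matrix n n 𝕜} (hA : A.IsHermitian) (hB : B.IsHermitian) :
    ‖A - B‖ ^ 2 = RCLike.re (A * A).trace - 2 * RCLike.re (A * B).trace
      + RCLike.re (B * B).trace := by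
  rw [frobenius_norm_sq_eq_re_trace, (hA.sub hB).eq]
  simp only [Matrix.mul_sub, Matrix.sub_mul, trace_sub, map_sub, trace_mul_comm B A]
  ring

lemma frobenius_norm_fromBlocks_sq {l o : Type*} [Fintype l] [Fintype o] (A : Matrix n l 𝕜)
    (B : Matrix n m 𝕜) (C : Matrix o l 𝕜) (D : Matrix o m 𝕜) :
    ‖fromBlocks A B C D‖ ^ 2 = ‖A‖ ^ 2 + ‖B‖ ^ 2 + ‖C‖ ^ 2 + ‖D‖ ^ 2 := by
  simp only [frobenius_norm_sq, Fintype.sum_sum_type, Finset.sum_add_distrib, fromBlocks_apply₁₁,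
    fromBlocks_apply₁₂, fromBlocks_apply₂₁, fromBlocks_apply₂₂]
  ring

lemma posSemidef_trace_mul_nonneg {A B : Matrix n n 𝕜} (hA : A.PosSemidef) (hB : B.PosSemidef) :
    0 ≤ (A * B).trace := by
  classical
  obtain ⟨C, rfl⟩ := CStarAlgebra.nonneg_iff_eq_star_mul_self.1 hA.nonneg
  rw [Matrix.mul_assoc, trace_mul_comm]
  exact (hB.mul_mul_conjTranspose_same C).trace_nonneg

variable [DecidableEq n]

lemma posSemidef_abs_add_self {H : Matrix n n 𝕜} (hH : H.IsHermitian) :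
    (CFC.abs H + H).PosSemidef := by
  rw [CFC.abs_add_self H hH]
  exact (nsmul_nonneg (CFC.posPart_nonneg H) 2).posSemidef

lemma posSemidef_abs_sub_self {H : Matrix n n 𝕜} (hH : H.IsHermitian) :
    (CFC.abs H - H).PosSemidef := by
  rw [CFC.abs_sub_self H hH]
  exact (nsmul_nonneg (CFC.negPart_nonneg H) 2).posSemidef

lemma re_trace_mul_le_re_trace_abs_mul_abs {H K : Matrix n n 𝕜} (hH : H.IsHermitian)
    (hK : K.IsHermitian) :
    RCLike.re (H * K).trace ≤ RCLike.re (CFC.abs H * CFC.abs K).trace := by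
  have h₁ := (RCLike.le_iff_re_im.1 <| posSemidef_trace_mul_nonneg
    (posSemidef_abs_add_self hH) (posSemidef_abs_sub_self hK)).1
  have h₂ := (RCLike.le_iff_re_im.1 <| posSemidef_trace_mul_nonneg
    (posSemidef_abs_sub_self hH) (posSemidef_abs_add_self hK)).1
  simp only [Matrix.mul_add, Matrix.add_mul, Matrix.mul_sub, Matrix.sub_mul, trace_add,
    trace_sub, map_add, map_sub, map_zero] at h₁ h₂
  linarith

theorem frobenius_norm_abs_sub_abs_le {H K : Matrix n n 𝕜} (hH : H.IsHermitian)
    (hK : K.IsHermitian) : ‖CFC.abs H - CFC.abs K‖ ≤ ‖H - K‖ := by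
  refine le_of_sq_le_sq ?_ (norm_nonneg _)
  rw [frobenius_norm_sub_sq hH hK, frobenius_norm_sub_sq (CFC.abs_nonneg H).posSemidef.1
    (CFC.abs_nonneg K).posSemidef.1, CFC.abs_mul_abs, CFC.abs_mul_abs, star_eq_conjTranspose,
    star_eq_conjTranspose, hH.eq, hK.eq]
  linarith [re_trace_mul_le_re_trace_abs_mul_abs hH hK]

end Frobenius

section HermitianDilation

open Matrix
open scoped MatrixOrder ComplexOrder Matrix.Norms.Frobenius

variable {𝕜 m n : Type*} [RCLike 𝕜]

lemma posSemidef_fromBlocks_diagonal [Finite m] [Finite n] {A : Matrix m m 𝕜} {D : Matrix n n 𝕜}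
    (hA : A.PosSemidef) (hD : D.PosSemidef) : (fromBlocks A 0 0 D).PosSemidef := by
  cases nonempty_fintype m
  cases nonempty_fintype n
  refine .of_dotProduct_mulVec_nonneg (.fromBlocks hA.1 (by simp) hD.1) fun x => ?_
  obtain ⟨y, z, rfl⟩ : ∃ y z, x = Sum.elim y z := ⟨_, _, (Sum.elim_comp_inl_inr x).symm⟩
  simpa [fromBlocks_mulVec, Function.star_sumElim] using
    add_nonneg (hA.dotProduct_mulVec_nonneg y) (hD.dotProduct_mulVec_nonneg z)

/-- The Hermitian dilation of a rectangular matrix `A`; its absolute value has the diagonal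
blocks `√(A Aᴴ)` and `√(Aᴴ A)`. -/
def hermitianDilation (A : Matrix m n 𝕜) : Matrix (m ⊕ n) (m ⊕ n) 𝕜 :=
  fromBlocks 0 A Aᴴ 0

lemma isHermitian_hermitianDilation (A : Matrix m n 𝕜) : (hermitianDilation A).IsHermitian :=
  .fromBlocks (by simp) rfl (by simp)

lemma hermitianDilation_sub (A B : Matrix m n 𝕜) :
    hermitianDilation (A - B) = hermitianDilation A - hermitianDilation B := by
  ext (i | i) (j | j) <;> simp [hermitianDilation]

variable [Fintype m] [Fintype n]

lemma frobenius_norm_hermitianDilation_sq (A : Matrix m n 𝕜) :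
    ‖hermitianDilation A‖ ^ 2 = 2 * ‖A‖ ^ 2 := by
  rw [hermitianDilation, frobenius_norm_fromBlocks_sq, frobenius_norm_conjTranspose, norm_zero,
    norm_zero]
  ring

variable [DecidableEq m]

lemma abs_hermitianDilation [DecidableEq n] (A : Matrix m n 𝕜) :
    CFC.abs (hermitianDilation A) = fromBlocks (CFC.sqrt (A * Aᴴ)) 0 0 (CFC.sqrt (Aᴴ * A)) := by
  refine CFC.sqrt_unique ?_ (posSemidef_fromBlocks_diagonal (CFC.sqrt_nonneg _).posSemidef
    (CFC.sqrt_nonneg _).posSemidef).nonneg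
  rw [star_eq_conjTranspose, (isHermitian_hermitianDilation A).eq]
  simp [hermitianDilation, fromBlocks_multiply,
    CFC.sqrt_mul_sqrt_self _ (posSemidef_self_mul_conjTranspose A).nonneg,
    CFC.sqrt_mul_sqrt_self _ (posSemidef_conjTranspose_mul_self A).nonneg]

lemma frobenius_norm_sqrt_sub_sqrt_le_abs_sub_abs [DecidableEq n] (A B : Matrix m n 𝕜) :
    ‖CFC.sqrt (A * Aᴴ) - CFC.sqrt (B * Bᴴ)‖ ≤
      ‖CFC.abs (hermitianDilation A) - CFC.abs (hermitianDilation B)‖ := by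
  have hblocks : CFC.abs (hermitianDilation A) - CFC.abs (hermitianDilation B) =
      fromBlocks (CFC.sqrt (A * Aᴴ) - CFC.sqrt (B * Bᴴ)) 0 0
        (CFC.sqrt (Aᴴ * A) - CFC.sqrt (Bᴴ * B)) := by
    rw [abs_hermitianDilation, abs_hermitianDilation]
    ext (i | i) (j | j) <;> simp
  refine le_of_sq_le_sq ?_ (norm_nonneg _)
  rw [hblocks, frobenius_norm_fromBlocks_sq]
  simp

theorem lipschitzWith_sqrt_mul_conjTranspose :
    LipschitzWith (NNReal.sqrt 2) fun A : Matrix m n 𝕜 => CFC.sqrt (A * Aᴴ) := by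
  refine .of_dist_le_mul fun A B => ?_
  classical
  rw [dist_eq_norm, dist_eq_norm, Real.coe_sqrt, NNReal.coe_ofNat]
  calc ‖CFC.sqrt (A * Aᴴ) - CFC.sqrt (B * Bᴴ)‖
      ≤ ‖CFC.abs (hermitianDilation A) - CFC.abs (hermitianDilation B)‖ :=
        frobenius_norm_sqrt_sub_sqrt_le_abs_sub_abs A B
    _ ≤ ‖hermitianDilation A - hermitianDilation B‖ :=
        frobenius_norm_abs_sub_abs_le (isHermitian_hermitianDilation A)
          (isHermitian_hermitianDilation B)
    _ = √2 * ‖A - B‖ := by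
        rw [← hermitianDilation_sub, ← Real.sqrt_sq (norm_nonneg (hermitianDilation _)),
          frobenius_norm_hermitianDilation_sq, Real.sqrt_mul zero_le_two,
          Real.sqrt_sq (norm_nonneg _)]

end HermitianDilation

section WeightedMoments

open Matrix WithLp
open scoped MatrixOrder Matrix.Norms.Frobenius

variable {ι κ E : Type*} [Fintype ι]

/-- The weights `w` rescaled to total mass one. -/
def normalizedWeight (w : ι → ℝ) (j : ι) : ℝ := w j / ∑ k, w k

/-- The mean `M` of the points `x j` with respect to the normalized weights. -/
def weightedMean [AddCommGroup E] [Module ℝ E] (w : ι → ℝ) (x : ι → E) : E :=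
  ∑ j, normalizedWeight w j • x j

/-- The vectors `√(w j) • (x j - M)`, for normalized weights `w j` and mean `M`: as the columns of
a matrix they give a factorization `D Dᵀ` of the weighted covariance. -/
def weightedDeviation [AddCommGroup E] [Module ℝ E] (w : ι → ℝ) (x : ι → E) (j : ι) : E :=
  √(normalizedWeight w j) • (x j - weightedMean w x)

/-- The covariance matrix of the points `x j` with respect to the normalized weights. -/
def weightedCov (w : ι → ℝ) (x : ι → EuclideanSpace ℝ κ) : Matrix κ κ ℝ := fun i i' =>
  ∑ j, normalizedWeight w j * ((x j i - weightedMean w x i) * (x j i' - weightedMean w x i'))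

/-- The matrix whose columns are the vectors `y j`; the Euclidean norm of the family `y` becomes
the Frobenius norm. -/
def columnMatrix {𝕜 ι κ : Type*} (y : ι → EuclideanSpace 𝕜 κ) : Matrix κ ι 𝕜 :=
  .of fun i j => y j i

lemma isometry_columnMatrix {𝕜 : Type*} [RCLike 𝕜] [Fintype κ] :
    Isometry fun y : PiLp 2 fun _ : ι => EuclideanSpace 𝕜 κ => columnMatrix (ofLp y) := by
  refine Isometry.of_dist_eq fun y z => ?_
  rw [dist_eq_norm, dist_eq_norm]
  refine (sq_eq_sq₀ (norm_nonneg _) (norm_nonneg _)).1 ?_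
  rw [frobenius_norm_sq, PiLp.norm_sq_eq_of_L2, Finset.sum_comm]
  simp [columnMatrix, PiLp.norm_sq_eq_of_L2]

lemma weightedCov_eq_columnMatrix_mul_conjTranspose {w : ι → ℝ} (hw : ∀ j, 0 ≤ w j)
    (x : ι → EuclideanSpace ℝ κ) :
    weightedCov w x =
      columnMatrix (weightedDeviation w x) * (columnMatrix (weightedDeviation w x))ᴴ := by
  ext i i'
  refine Finset.sum_congr rfl fun j _ => ?_
  have hsqrt : √(normalizedWeight w j) * √(normalizedWeight w j) = normalizedWeight w j :=
    Real.mul_self_sqrt (div_nonneg (hw j) (Finset.sum_nonneg fun k _ => hw k))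
  simp only [columnMatrix, weightedDeviation, of_apply, conjTranspose_apply, star_trivial,
    PiLp.smul_apply, PiLp.sub_apply, smul_eq_mul]
  linear_combination
    -((x j i - weightedMean w x i) * (x j i' - weightedMean w x i')) * hsqrt

section PositiveWeights

variable {w : ι → ℝ} {n : WithTop ℕ∞}

lemma sum_pos_of_forall_pos (hw : ∀ j, 0 < w j) (j : ι) : 0 < ∑ k, w k :=
  Finset.sum_pos (fun k _ => hw k) ⟨j, Finset.mem_univ j⟩

lemma normalizedWeight_pos (hw : ∀ j, 0 < w j) (j : ι) : 0 < normalizedWeight w j :=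
  div_pos (hw j) (sum_pos_of_forall_pos hw j)

lemma contDiffAt_normalizedWeight (hw : ∀ j, 0 < w j) (j : ι) :
    ContDiffAt ℝ n (fun v => normalizedWeight v j) w := by
  unfold normalizedWeight
  exact .div (by fun_prop) (by fun_prop) (sum_pos_of_forall_pos hw j).ne'

variable [NormedAddCommGroup E] [NormedSpace ℝ E]

lemma contDiffAt_weightedMean (hw : ∀ j, 0 < w j) (x : ι → E) :
    ContDiffAt ℝ n (fun p : (ι → ℝ) × (ι → E) => weightedMean p.1 p.2) (w, x) :=
  .sum fun j _ => .smul ((contDiffAt_normalizedWeight hw j).comp (w, x) contDiffAt_fst)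
    (by fun_prop)

lemma contDiffAt_weightedDeviation (hw : ∀ j, 0 < w j) (x : ι → E) :
    ContDiffAt ℝ n (fun p : (ι → ℝ) × (ι → E) => weightedDeviation p.1 p.2) (w, x) := by
  refine contDiffAt_pi.2 fun j => ?_
  have hsqrt : ContDiffAt ℝ n (fun v => √(normalizedWeight v j)) w :=
    (contDiffAt_normalizedWeight hw j).sqrt (normalizedWeight_pos hw j).ne'
  have hsub : ContDiffAt ℝ n (fun p : (ι → ℝ) × (ι → E) => p.2 j - weightedMean p.1 p.2) (w, x) :=
    .sub (by fun_prop) (contDiffAt_weightedMean hw x)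
  exact (hsqrt.comp (w, x) contDiffAt_fst).smul hsub

end PositiveWeights

section WeightFunction

lemma locallyLipschitz_comp_prodMk_id {α β : Type*} [PseudoEMetricSpace α]
    [PseudoEMetricSpace β] {φ : α → β} (hφ : LocallyLipschitz φ) :
    LocallyLipschitz fun x : ι → α => (φ ∘ x, x) :=
  (locallyLipschitz_pi fun j => hφ.comp (LipschitzWith.eval j).locallyLipschitz).prodMk .id

variable [NormedAddCommGroup E] [NormedSpace ℝ E] {φ : E → ℝ}

theorem locallyLipschitz_weightedMean (hφ : LocallyLipschitz φ)
    (hpos : ∀ x, 0 < φ x) : LocallyLipschitz fun x : ι → E => weightedMean (φ ∘ x) x :=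
  locallyLipschitz_comp_of_contDiffAt (G := fun p : (ι → ℝ) × (ι → E) => weightedMean p.1 p.2)
    (locallyLipschitz_comp_prodMk_id hφ) fun x => contDiffAt_weightedMean (fun j => hpos (x j)) x

lemma locallyLipschitz_weightedDeviation (hφ : LocallyLipschitz φ)
    (hpos : ∀ x, 0 < φ x) : LocallyLipschitz fun x : ι → E => weightedDeviation (φ ∘ x) x :=
  locallyLipschitz_comp_of_contDiffAt
    (G := fun p : (ι → ℝ) × (ι → E) => weightedDeviation p.1 p.2)
    (locallyLipschitz_comp_prodMk_id hφ) fun x =>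
      contDiffAt_weightedDeviation (fun j => hpos (x j)) x

theorem locallyLipschitz_sqrt_weightedCov [Fintype κ] [DecidableEq κ]
    {φ : EuclideanSpace ℝ κ → ℝ} (hφ : LocallyLipschitz φ) (hpos : ∀ x, 0 < φ x) :
    LocallyLipschitz fun x : ι → EuclideanSpace ℝ κ => CFC.sqrt (weightedCov (φ ∘ x) x) := by
  have hfactor : LocallyLipschitz fun x : ι → EuclideanSpace ℝ κ =>
      columnMatrix (weightedDeviation (φ ∘ x) x) :=
    (isometry_columnMatrix.lipschitz.comp (PiLp.lipschitzWith_toLp 2 _)).locallyLipschitz.comp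
      (locallyLipschitz_weightedDeviation hφ hpos)
  have hcov (x : ι → EuclideanSpace ℝ κ) :=
    weightedCov_eq_columnMatrix_mul_conjTranspose (w := φ ∘ x) (fun j => (hpos (x j)).le) x
  simp only [hcov]
  exact lipschitzWith_sqrt_mul_conjTranspose.locallyLipschitz.comp hfactor

end WeightFunction

end WeightedMoments

section ParticleEnsemble

open WithLp
open scoped MatrixOrder Matrix.Norms.Frobenius

lemma tupleNorm_eq_norm_toLp {d J : ℕ} (X : Fin J → Rd d) : tupleNorm X = ‖toLp 2 X‖ :=
  (PiLp.norm_eq_of_L2 _).symm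

lemma frobNorm_eq_norm {m n : ℕ} (A : Matrix (Fin m) (Fin n) ℝ) : frobNorm A = ‖A‖ := by
  rw [frobNorm, ← Real.sqrt_sq (norm_nonneg A), frobenius_norm_sq]
  simp only [Real.norm_eq_abs, sq_abs]

lemma sqrt_eq_of_isPSDSqrt {d : ℕ} {S A : Matrix (Fin d) (Fin d) ℝ} (h : IsPSDSqrt S A) :
    CFC.sqrt A = S :=
  CFC.sqrt_unique h.2 h.1.nonneg

theorem particle_weighted_moments_local_lipschitz_general {d J : ℕ} {φ : Rd d → ℝ}
    (hφ : LocallyLipschitz φ) (hpos : ∀ x, 0 < φ x) (R : ℝ) :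
    ∃ C > 0, ∀ X Y : Fin J → Rd d, tupleNorm X ≤ R → tupleNorm Y ≤ R →
      ‖weightedMean (φ ∘ X) X - weightedMean (φ ∘ Y) Y‖ ≤ C * tupleNorm (X - Y) ∧
      ∀ SX SY : Matrix (Fin d) (Fin d) ℝ,
        IsPSDSqrt SX (weightedCov (φ ∘ X) X) → IsPSDSqrt SY (weightedCov (φ ∘ Y) Y) →
        frobNorm (SX - SY) ≤ C * tupleNorm (X - Y) := by
  have hmoments := ((locallyLipschitz_weightedMean hφ hpos).prodMk
    (locallyLipschitz_sqrt_weightedCov hφ hpos)).comp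
      (PiLp.lipschitzWith_ofLp 2 fun _ : Fin J => Rd d).locallyLipschitz
  obtain ⟨C, hC, hlip⟩ := exists_norm_sub_le_of_locallyLipschitz hmoments R
  simp only [tupleNorm_eq_norm_toLp, frobNorm_eq_norm]
  refine ⟨C, hC, fun X Y hX hY => ?_⟩
  have hXY := hlip (toLp 2 X) (toLp 2 Y) hX hY
  refine ⟨(_root_.norm_fst_le _).trans hXY, fun SX SY hSX hSY => ?_⟩
  rw [← sqrt_eq_of_isPSDSqrt hSX, ← sqrt_eq_of_isPSDSqrt hSY]
  exact (_root_.norm_snd_le _).trans hXY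

end ParticleEnsemble

/-- **Local Lipschitz continuity of the weighted mean and square root covariance of a
particle ensemble.**
If `f` is locally Lipschitz, then for each `R > 0` there is `C > 0` such that for all
ensembles `X, Y` with `|X| ≤ R`, `|Y| ≤ R`, one has `|M_β(X) - M_β(Y)| ≤ C |X - Y|` and
`‖√C_β(X) - √C_β(Y)‖_F ≤ C |X - Y|`. -/
theorem particle_weighted_moments_local_lipschitz
    (β : ℝ) (hβ : 0 < β) (d : ℕ) (hd : 1 ≤ d) (J : ℕ) (hJ : 1 ≤ J)
    (f : Rd d → ℝ) (hf : LocallyLipschitz f) (R : ℝ) (hR : 0 < R) :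
    ∃ C > 0, ∀ X Y : Fin J → Rd d, tupleNorm X ≤ R → tupleNorm Y ≤ R →
      ‖pMean β f X - pMean β f Y‖ ≤ C * tupleNorm (X - Y) ∧
      ∀ SX SY : Matrix (Fin d) (Fin d) ℝ,
        IsPSDSqrt SX (pCov β f X) → IsPSDSqrt SY (pCov β f Y) →
        frobNorm (SX - SY) ≤ C * tupleNorm (X - Y) := by
  have hexp : LocallyLipschitz fun x => Real.exp (-β * f x) :=
    locallyLipschitz_comp_of_contDiffAt (G := fun y => Real.exp (-β * y)) hf (by fun_prop)
  exact particle_weighted_moments_local_lipschitz_general hexp (fun _ => Real.exp_pos _) R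

end
end

section
/- Fix d, m, n ≥ 1, p and R > 0. Let g : ℝ^d → ℝ^{m×n}, h : ℝ^d → (0, ∞), and S a map from Borel probability measures on ℝ^d to ℝ^n such that: (a) for some ς ≥ 0 and L > 0, max(‖g(x) − g(y)‖_F, |h(x) − h(y)|) ≤ L (1 + |x| + |y|)^ς |x − y| for all x, y ∈ ℝ^d; and (b) there is L_S > 0 with |S(μ) − S(ν)| ≤ L_S · W_p(μ, ν) for all μ, ν ∈ P_{p,R}(ℝ^d). Then, provided p ≥ 2ς + 2, there exists a constant C > 0 such that for all μ, ν ∈ P_{p,R}(ℝ^d) and every coupling π of μ and ν, ( ∬ | g(x) S(μ) / √(∫ h dμ) − g(y) S(ν) / √(∫ h dν) |^2 π(dx dy) )^{1/2} ≤ C ( ∬ |x − y|^p π(dx dy) )^{1/p}. -/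
open MeasureTheory ENNReal
open scoped NNReal

noncomputable section

/-- The Euclidean norm of a vector `v ∈ ℝ^k` given as a plain function. -/
def vecNorm {k : ℕ} (v : Fin k → ℝ) : ℝ := Real.sqrt (∑ i, v i ^ 2)

/-!
Put `U(μ) = S(μ) / √(∫ h dμ)`. By Markov's inequality every `μ ∈ P_{p,R}` has half of its mass
in one fixed ball, so `∫ h dμ` is bounded below, and `U` is bounded and Lipschitz along
couplings. Split `g(x) U(μ) - g(y) U(ν) = (g(x) - g(y)) U(μ) + g(y) (U(μ) - U(ν))`. In the first
term, Hölder's inequality bounds the `L²` norm of `(1 + |x| + |y|)^ς |x - y|` by the `L^p` norms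
of its two factors, which is where `2 (ς + 1) ≤ p` enters; in the second, the same condition
bounds `g` in `L²`.
-/

section WeightedLpBounds

variable {α E F G : Type*} [MeasurableSpace α] [NormedAddCommGroup E] [NormedAddCommGroup F]
  [NormedAddCommGroup G] {μ : Measure α} {p r s L : ℝ≥0}

lemma eLpNorm_rpow_mul_le {u v : α → ℝ≥0∞} (hu : AEMeasurable u μ) (hv : AEMeasurable v μ)
    (hr : 0 < r) (hrp : r ≤ p) :
    eLpNorm (fun x ↦ u x ^ ((p : ℝ) / r - 1) * v x) r μ ≤
      eLpNorm u p μ ^ ((p : ℝ) / r - 1) * eLpNorm v p μ := by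
  have hp : 0 < p := hr.trans_le hrp
  have hr' : (0 : ℝ) < r := hr
  have hp' : (0 : ℝ) < p := hp
  have hrp' : (r : ℝ) ≤ p := hrp
  have holder : ∫⁻ x, (u x ^ ((p : ℝ) / r - 1) * v x) ^ (r : ℝ) ∂μ ≤
      (∫⁻ x, u x ^ (p : ℝ) ∂μ) ^ ((p - r : ℝ) / p) * (∫⁻ x, v x ^ (p : ℝ) ∂μ) ^ ((r : ℝ) / p) := by
    refine (lintegral_congr fun x ↦ ?_).trans_le (ENNReal.lintegral_mul_norm_pow_le
      (hu.pow_const _) (hv.pow_const _) (div_nonneg (sub_nonneg.2 hrp') hp'.le)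
      (by positivity) (by field_simp; ring))
    rw [ENNReal.mul_rpow_of_nonneg _ _ hr'.le]
    simp only [← ENNReal.rpow_mul]
    congr 2 <;> field_simp
  rw [eLpNorm_nnreal_eq_lintegral hr.ne', eLpNorm_nnreal_eq_lintegral hp.ne',
    eLpNorm_nnreal_eq_lintegral hp.ne']
  simp only [enorm_eq_self]
  grw [holder]
  rw [ENNReal.mul_rpow_of_nonneg _ _ (by positivity)]
  simp only [← ENNReal.rpow_mul]
  apply le_of_eq
  congr 2 <;> field_simp

lemma eLpNorm_le_of_norm_le_rpow_mul {f : α → F} {g : α → E} {w : α → ℝ} (hw : ∀ x, 1 ≤ w x)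
    (hwm : AEStronglyMeasurable w μ) (hgm : AEStronglyMeasurable g μ)
    (hf : ∀ x, ‖f x‖ ≤ L * w x ^ (s : ℝ) * ‖g x‖) (hr : 0 < r) (hrp : r * (s + 1) ≤ p) :
    eLpNorm f r μ ≤ L * (eLpNorm w p μ ^ ((p : ℝ) / r - 1) * eLpNorm g p μ) := by
  have hrp' : (s + 1 : ℝ) * r ≤ p := mod_cast mul_comm r (s + 1) ▸ hrp
  have hs : (s : ℝ) ≤ p / r - 1 := le_sub_iff_add_le.2 ((le_div_iff₀ (by positivity)).2 hrp')
  have hle : r ≤ p := (le_mul_of_one_le_right r.2 (by simp)).trans hrp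
  have pointwise (x : α) : ‖f x‖ₑ ≤ L * (‖w x‖ₑ ^ ((p : ℝ) / r - 1) * ‖g x‖ₑ) := by
    have hw0 : 0 < w x := one_pos.trans_le (hw x)
    rw [← ofReal_norm, Real.enorm_of_nonneg hw0.le, ENNReal.ofReal_rpow_of_pos hw0, ← ofReal_norm,
      ← ENNReal.ofReal_coe_nnreal, ← ENNReal.ofReal_mul (by positivity),
      ← ENNReal.ofReal_mul (by positivity)]
    apply ENNReal.ofReal_le_ofReal
    grw [hf x, Real.rpow_le_rpow_of_exponent_le (hw x) hs, mul_assoc]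
  calc eLpNorm f r μ
      ≤ L * eLpNorm (fun x ↦ ‖w x‖ₑ ^ ((p : ℝ) / r - 1) * ‖g x‖ₑ) r μ :=
        eLpNorm_le_nnreal_smul_eLpNorm_of_ae_le_mul' (ae_of_all _ pointwise) r
    _ ≤ L * (eLpNorm (‖w ·‖ₑ) p μ ^ ((p : ℝ) / r - 1) * eLpNorm (‖g ·‖ₑ) p μ) := by
        grw [eLpNorm_rpow_mul_le hwm.enorm hgm.enorm hr hle]
    _ = L * (eLpNorm w p μ ^ ((p : ℝ) / r - 1) * eLpNorm g p μ) := by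
        rw [eLpNorm_enorm, eLpNorm_enorm]

lemma eLpNorm_clm_apply_le [NormedSpace ℝ F] [NormedSpace ℝ G] (A : α → F →L[ℝ] G) (v : F)
    (q : ℝ≥0∞) : eLpNorm (fun x ↦ A x v) q μ ≤ ‖v‖ₑ * eLpNorm A q μ :=
  eLpNorm_le_nnreal_smul_eLpNorm_of_ae_le_mul
    (ae_of_all _ fun x ↦ by simpa only [mul_comm ‖v‖₊] using (A x).le_opNNNorm v) q

end WeightedLpBounds

section GrowthLipschitz

/-- Local Lipschitz continuity with a Lipschitz constant of polynomial growth of order `s`: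
`‖f x - f y‖ ≤ L (1 + ‖x‖ + ‖y‖) ^ s ‖x - y‖` for some `L`. -/
def GrowthLipschitz {E F : Type*} [NormedAddCommGroup E] [NormedAddCommGroup F] (s : ℝ≥0)
    (f : E → F) : Prop :=
  ∃ L : ℝ≥0, ∀ x y, ‖f x - f y‖ ≤ L * (1 + ‖x‖ + ‖y‖) ^ (s : ℝ) * ‖x - y‖

variable {E F : Type*} [NormedAddCommGroup E] [NormedAddCommGroup F] {s : ℝ≥0} {f : E → F}

lemma GrowthLipschitz.continuous (hf : GrowthLipschitz s f) : Continuous f := by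
  obtain ⟨L, hL⟩ := hf
  refine continuous_iff_continuousAt.2 fun x ↦ tendsto_iff_norm_sub_tendsto_zero.2 ?_
  have hbound : Continuous fun y ↦ L * (1 + ‖y‖ + ‖x‖) ^ (s : ℝ) * ‖y - x‖ := by
    fun_prop (disch := exact s.coe_nonneg)
  exact squeeze_zero (fun _ ↦ norm_nonneg _) (fun y ↦ hL y x) (by simpa using hbound.tendsto x)

lemma GrowthLipschitz.exists_norm_le (hf : GrowthLipschitz s f) :
    ∃ C : ℝ≥0, ∀ x, ‖f x‖ ≤ C * (1 + ‖x‖) ^ (s : ℝ) * (1 + ‖x‖) := by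
  obtain ⟨L, hL⟩ := hf
  refine ⟨‖f 0‖₊ + L, fun x ↦ ?_⟩
  have hw : 1 ≤ 1 + ‖x‖ := by simp
  calc ‖f x‖ ≤ ‖f 0‖ + ‖f x - f 0‖ := norm_le_norm_add_norm_sub' _ _
    _ ≤ ‖f 0‖ * (1 * 1) + L * (1 + ‖x‖) ^ (s : ℝ) * ‖x‖ := by simpa using hL x 0
    _ ≤ ‖f 0‖ * ((1 + ‖x‖) ^ (s : ℝ) * (1 + ‖x‖)) + L * (1 + ‖x‖) ^ (s : ℝ) * (1 + ‖x‖) := by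
        gcongr
        · exact Real.one_le_rpow hw s.coe_nonneg
        · simp
    _ = (‖f 0‖₊ + L : ℝ≥0) * (1 + ‖x‖) ^ (s : ℝ) * (1 + ‖x‖) := by
        push_cast
        ring

end GrowthLipschitz

section MomentBall

variable {E F : Type*} [NormedAddCommGroup E] [MeasurableSpace E] {p r R s : ℝ≥0}

/-- The set `P_{p,R}` of probability measures with `(∫ ‖x‖ ^ p ∂μ) ^ (1 / p) ≤ R`;
for `p = 0` the moment condition is void. -/
def momentBall (p R : ℝ≥0) : Set (Measure E) :=
  {μ | IsProbabilityMeasure μ ∧ eLpNorm id p μ ≤ R}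

/-- The couplings of two elements of `P_{p,R}`; the coupled measures are the marginals `π.fst` and
`π.snd`. -/
def momentCouplings (p R : ℝ≥0) : Set (Measure (E × E)) :=
  {π | π.fst ∈ momentBall p R ∧ π.snd ∈ momentBall p R}

variable [NormedAddCommGroup F] [BorelSpace E] [SecondCountableTopology E]
  {μ : Measure E} {π : Measure (E × E)} {f : E → F}

lemma eLpNorm_one_add_norm_le (hp : 1 ≤ p) (hμ : μ ∈ momentBall p R) :
    eLpNorm (fun x ↦ 1 + ‖x‖) p μ ≤ 1 + R := by
  have := hμ.1
  calc eLpNorm (fun x ↦ 1 + ‖x‖) p μ ≤ eLpNorm (fun _ ↦ (1 : ℝ)) p μ + eLpNorm (‖id ·‖) p μ :=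
        eLpNorm_add_le (by fun_prop) (by fun_prop) (mod_cast hp)
    _ ≤ 1 + R := by
        gcongr
        · exact (eLpNorm_const _ (by positivity) hμ.1.ne_zero).trans_le (by simp)
        · exact (eLpNorm_norm _).trans_le hμ.2

lemma eLpNorm_one_add_norm_add_norm_le (hp : 1 ≤ p) (hπ : π ∈ momentCouplings p R) :
    eLpNorm (fun z ↦ 1 + ‖z.1‖ + ‖z.2‖) p π ≤ 1 + R + R := by
  calc eLpNorm (fun z ↦ 1 + ‖z.1‖ + ‖z.2‖) p π
      ≤ eLpNorm ((1 + ‖·‖) ∘ Prod.fst) p π + eLpNorm (norm ∘ Prod.snd) p π :=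
        eLpNorm_add_le (by fun_prop) (by fun_prop) (mod_cast hp)
    _ = eLpNorm (1 + ‖·‖) p π.fst + eLpNorm (‖id ·‖) p π.snd := by
        rw [Measure.fst, eLpNorm_map_measure (by fun_prop) (by fun_prop), Measure.snd,
          eLpNorm_map_measure (by fun_prop) (by fun_prop)]
        rfl
    _ ≤ 1 + R + R := by
        gcongr
        · exact eLpNorm_one_add_norm_le hp hπ.1
        · exact (eLpNorm_norm _).trans_le hπ.2.2

lemma GrowthLipschitz.exists_eLpNorm_le (hf : GrowthLipschitz s f) (hr : 1 ≤ r)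
    (hrp : r * (s + 1) ≤ p) (R : ℝ≥0) :
    ∃ C : ℝ≥0, ∀ μ ∈ momentBall p R, eLpNorm f r μ ≤ C := by
  obtain ⟨C, hC⟩ := hf.exists_norm_le
  have hle : r ≤ p := (le_mul_of_one_le_right r.2 (by simp)).trans hrp
  have hexp : 0 ≤ (p : ℝ) / r - 1 :=
    sub_nonneg.2 ((one_le_div (by positivity)).2 (mod_cast hle))
  refine ⟨C * ((1 + R) ^ ((p : ℝ) / r - 1) * (1 + R)), fun μ hμ ↦ ?_⟩
  calc eLpNorm f r μ
      ≤ C * (eLpNorm (fun x ↦ 1 + ‖x‖) p μ ^ ((p : ℝ) / r - 1) *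
          eLpNorm (fun x ↦ 1 + ‖x‖) p μ) :=
        eLpNorm_le_of_norm_le_rpow_mul (fun x ↦ by simp) (by fun_prop) (by fun_prop)
          (fun x ↦ by simpa [abs_of_pos (show 0 < 1 + ‖x‖ by positivity)] using hC x)
          (one_pos.trans_le hr) hrp
    _ ≤ C * ((1 + R) ^ ((p : ℝ) / r - 1) * (1 + R)) := by
        grw [eLpNorm_one_add_norm_le (hr.trans hle) hμ]
    _ = (C * ((1 + R) ^ ((p : ℝ) / r - 1) * (1 + R)) : ℝ≥0) := by
        simp [ENNReal.coe_rpow_of_nonneg _ hexp]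

lemma GrowthLipschitz.exists_eLpNorm_fst_sub_snd_le (hf : GrowthLipschitz s f) (hr : 1 ≤ r)
    (hrp : r * (s + 1) ≤ p) (R : ℝ≥0) :
    ∃ C : ℝ≥0, ∀ π ∈ momentCouplings p R,
      eLpNorm (fun z ↦ f z.1 - f z.2) r π ≤ C * eLpNorm (fun z ↦ z.1 - z.2) p π := by
  obtain ⟨L, hL⟩ := hf
  have hle : r ≤ p := (le_mul_of_one_le_right r.2 (by simp)).trans hrp
  have hexp : 0 ≤ (p : ℝ) / r - 1 :=
    sub_nonneg.2 ((one_le_div (by positivity)).2 (mod_cast hle))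
  refine ⟨L * (1 + R + R) ^ ((p : ℝ) / r - 1), fun π hπ ↦ ?_⟩
  calc eLpNorm (fun z ↦ f z.1 - f z.2) r π
      ≤ L * (eLpNorm (fun z ↦ 1 + ‖z.1‖ + ‖z.2‖) p π ^ ((p : ℝ) / r - 1) *
          eLpNorm (fun z ↦ z.1 - z.2) p π) :=
        eLpNorm_le_of_norm_le_rpow_mul (fun z ↦ by simp [add_assoc, add_nonneg]) (by fun_prop)
          (by fun_prop) (fun z ↦ hL z.1 z.2) (one_pos.trans_le hr) hrp
    _ ≤ L * ((1 + R + R) ^ ((p : ℝ) / r - 1) * eLpNorm (fun z ↦ z.1 - z.2) p π) := by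
        grw [eLpNorm_one_add_norm_add_norm_le (hr.trans hle) hπ]
    _ = (L * (1 + R + R) ^ ((p : ℝ) / r - 1) : ℝ≥0) * eLpNorm (fun z ↦ z.1 - z.2) p π := by
        simp [ENNReal.coe_rpow_of_nonneg _ hexp, mul_assoc]

lemma GrowthLipschitz.integrable (hf : GrowthLipschitz s f) (hsp : s + 1 ≤ p)
    (hμ : μ ∈ momentBall p R) : Integrable f μ := by
  obtain ⟨C, hC⟩ := hf.exists_eLpNorm_le le_rfl (by simpa using hsp) R
  exact memLp_one_iff_integrable.1
    ⟨hf.continuous.aestronglyMeasurable, (hC μ hμ).trans_lt ENNReal.coe_lt_top⟩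

lemma half_le_measureReal_closedBall (hp : 1 ≤ p) (hμ : μ ∈ momentBall p R) :
    1 / 2 ≤ μ.real (Metric.closedBall 0 (2 * R + 1)) := by
  have := hμ.1
  have hmean : ∫⁻ x, ‖x‖ₑ ∂μ ≤ R := by
    rw [← eLpNorm_one_eq_lintegral_enorm]
    exact (eLpNorm_le_eLpNorm_of_exponent_le (mod_cast hp) (by fun_prop)).trans hμ.2
  have hsub : (Metric.closedBall 0 (2 * R + 1))ᶜ ⊆ {x : E | (2 * R + 1 : ℝ≥0) ≤ ‖x‖ₑ} := by
    intro x hx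
    simp only [Set.mem_compl_iff, mem_closedBall_zero_iff, not_le] at hx
    exact ENNReal.coe_le_coe.2 hx.le
  have hcompl : μ.real (Metric.closedBall 0 (2 * R + 1))ᶜ ≤ 1 / 2 := by
    refine ENNReal.toReal_le_of_le_ofReal (by norm_num) ?_
    calc μ (Metric.closedBall 0 (2 * R + 1))ᶜ
        ≤ (∫⁻ x, ‖x‖ₑ ∂μ) / (2 * R + 1 : ℝ≥0) :=
          (measure_mono hsub).trans
            (meas_ge_le_lintegral_div (by fun_prop) (by simp) ENNReal.coe_ne_top)
      _ ≤ R / (2 * R + 1 : ℝ≥0) := by grw [hmean]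
      _ ≤ ENNReal.ofReal (1 / 2) := by
          refine ENNReal.div_le_of_le_mul ?_
          rw [← ENNReal.ofReal_coe_nnreal, ← ENNReal.ofReal_coe_nnreal,
            ← ENNReal.ofReal_mul (by norm_num)]
          apply ENNReal.ofReal_le_ofReal
          push_cast
          linarith
  rw [probReal_compl_eq_one_sub measurableSet_closedBall] at hcompl
  linarith

lemma GrowthLipschitz.exists_pos_le_integral [ProperSpace E] {h : E → ℝ}
    (hh : GrowthLipschitz s h) (hpos : ∀ x, 0 < h x) (hsp : s + 1 ≤ p) (R : ℝ≥0) :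
    ∃ c > 0, ∀ μ ∈ momentBall p R, c ≤ ∫ x, h x ∂μ := by
  obtain ⟨x₀, -, hmin⟩ := (isCompact_closedBall (0 : E) (2 * R + 1)).exists_isMinOn
    ⟨0, Metric.mem_closedBall_self (by positivity)⟩ hh.continuous.continuousOn
  have hp : 1 ≤ p := le_add_self.trans hsp
  refine ⟨h x₀ * (1 / 2), by have := hpos x₀; positivity, fun μ hμ ↦ ?_⟩
  have := hμ.1
  have hint := hh.integrable hsp hμ
  calc h x₀ * (1 / 2) ≤ h x₀ * μ.real (Metric.closedBall 0 (2 * R + 1)) := by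
        grw [half_le_measureReal_closedBall hp hμ]
        exact (hpos x₀).le
    _ ≤ ∫ x in Metric.closedBall 0 (2 * R + 1), h x ∂μ :=
        setIntegral_ge_of_const_le_real measurableSet_closedBall (by finiteness)
          (fun _ hx ↦ hmin hx) hint.integrableOn
    _ ≤ ∫ x, h x ∂μ := setIntegral_le_integral hint (ae_of_all _ fun x ↦ (hpos x).le)

end MomentBall

section CouplingLipschitz

variable {E F G : Type*} [NormedAddCommGroup E] [MeasurableSpace E] [NormedAddCommGroup F]
  [NormedAddCommGroup G] {p R s : ℝ≥0}

/-- Lipschitz continuity of a functional of measures on `P_{p,R}` with respect to the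
Wasserstein-`p` distance. The infimum defining that distance is replaced by a bound along every
coupling. -/
def CouplingLipschitz (p R : ℝ≥0) (Φ : Measure E → F) : Prop :=
  ∃ K : ℝ≥0, ∀ π ∈ momentCouplings p R,
    ‖Φ π.fst - Φ π.snd‖ₑ ≤ K * eLpNorm (fun z ↦ z.1 - z.2) p π

lemma CouplingLipschitz.comp_lipschitzOnWith {Φ : Measure E → F} (hΦ : CouplingLipschitz p R Φ)
    {φ : F → G} {K : ℝ≥0} {t : Set F} (hφ : LipschitzOnWith K φ t)
    (hmaps : Set.MapsTo Φ (momentBall p R) t) : CouplingLipschitz p R (φ ∘ Φ) := by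
  obtain ⟨K', hK'⟩ := hΦ
  refine ⟨K * K', fun π hπ ↦ ?_⟩
  have := hφ (hmaps hπ.1) (hmaps hπ.2)
  rw [edist_eq_enorm_sub, edist_eq_enorm_sub] at this
  grw [Function.comp_apply, Function.comp_apply, this, hK' π hπ, ENNReal.coe_mul, mul_assoc]

variable [BorelSpace E] [SecondCountableTopology E]

/-- Compare with the Dirac mass at the origin, at distance at most `R`. -/
lemma CouplingLipschitz.exists_enorm_le {Φ : Measure E → F} (hΦ : CouplingLipschitz p R Φ) :
    ∃ B : ℝ≥0, ∀ μ ∈ momentBall p R, ‖Φ μ‖ₑ ≤ B := by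
  obtain ⟨K, hK⟩ := hΦ
  refine ⟨‖Φ (Measure.dirac 0)‖₊ + K * R, fun μ hμ ↦ ?_⟩
  have := hμ.1
  set π : Measure (E × E) := μ.map fun x ↦ (x, 0)
  have hfst : π.fst = μ := by simp [π, Measure.fst_map_prodMk]
  have hsnd : π.snd = Measure.dirac 0 := by
    simp [π, Measure.snd_map_prodMk (X := fun x : E ↦ x) (by fun_prop)]
  have hdirac : Measure.dirac (0 : E) ∈ momentBall p R :=
    ⟨inferInstance, by
      rw [eLpNorm_congr_ae (g := 0) (by simp [Filter.EventuallyEq, ae_dirac_eq])]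
      simp⟩
  have hcost : eLpNorm (fun z ↦ z.1 - z.2) p π ≤ R := by
    rw [eLpNorm_map_measure (by fun_prop) (by fun_prop)]
    simpa [Function.comp_def, Function.id_def] using hμ.2
  have hdiff := hK π ⟨hfst.symm ▸ hμ, hsnd.symm ▸ hdirac⟩
  rw [hfst, hsnd] at hdiff
  calc ‖Φ μ‖ₑ ≤ ‖Φ (Measure.dirac 0)‖ₑ + ‖Φ μ - Φ (Measure.dirac 0)‖ₑ := by
        simpa using enorm_add_le (Φ (Measure.dirac 0)) (Φ μ - Φ (Measure.dirac 0))
    _ ≤ ‖Φ (Measure.dirac 0)‖ₑ + K * R := by grw [hdiff, hcost]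
    _ = (‖Φ (Measure.dirac 0)‖₊ + K * R : ℝ≥0) := by push_cast; rfl

lemma CouplingLipschitz.smul [NormedSpace ℝ F] {φ : Measure E → ℝ} {Φ : Measure E → F}
    (hφ : CouplingLipschitz p R φ) (hΦ : CouplingLipschitz p R Φ) :
    CouplingLipschitz p R (fun μ ↦ φ μ • Φ μ) := by
  obtain ⟨A, hA⟩ := hφ.exists_enorm_le
  obtain ⟨B, hB⟩ := hΦ.exists_enorm_le
  obtain ⟨K, hK⟩ := hφ
  obtain ⟨L, hL⟩ := hΦ
  refine ⟨A * L + K * B, fun π hπ ↦ ?_⟩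
  calc ‖φ π.fst • Φ π.fst - φ π.snd • Φ π.snd‖ₑ
      = ‖φ π.fst • (Φ π.fst - Φ π.snd) + (φ π.fst - φ π.snd) • Φ π.snd‖ₑ := by congr 1; module
    _ ≤ ‖φ π.fst‖ₑ * ‖Φ π.fst - Φ π.snd‖ₑ + ‖φ π.fst - φ π.snd‖ₑ * ‖Φ π.snd‖ₑ := by
        grw [enorm_add_le, enorm_smul, enorm_smul]
    _ ≤ A * (L * eLpNorm (fun z ↦ z.1 - z.2) p π) +
          K * eLpNorm (fun z ↦ z.1 - z.2) p π * B := by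
        grw [hA _ hπ.1, hB _ hπ.2, hK π hπ, hL π hπ]
    _ = (A * L + K * B : ℝ≥0) * eLpNorm (fun z ↦ z.1 - z.2) p π := by
        push_cast
        ring

lemma GrowthLipschitz.couplingLipschitz_integral [NormedSpace ℝ F] {f : E → F}
    (hf : GrowthLipschitz s f) (hsp : s + 1 ≤ p) (R : ℝ≥0) :
    CouplingLipschitz p R (fun μ ↦ ∫ x, f x ∂μ) := by
  obtain ⟨C, hC⟩ := hf.exists_eLpNorm_fst_sub_snd_le le_rfl (by simpa using hsp) R
  refine ⟨C, fun π hπ ↦ ?_⟩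
  have hfst : Integrable (fun z ↦ f z.1) π :=
    (hf.integrable hsp hπ.1).comp_measurable measurable_fst
  have hsnd : Integrable (fun z ↦ f z.2) π :=
    (hf.integrable hsp hπ.2).comp_measurable measurable_snd
  calc ‖∫ x, f x ∂π.fst - ∫ x, f x ∂π.snd‖ₑ = ‖∫ z, f z.1 - f z.2 ∂π‖ₑ := by
        rw [integral_sub hfst hsnd, Measure.fst, Measure.snd,
          integral_map (by fun_prop) hf.continuous.aestronglyMeasurable,
          integral_map (by fun_prop) hf.continuous.aestronglyMeasurable]
    _ ≤ eLpNorm (fun z ↦ f z.1 - f z.2) 1 π := by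
        rw [eLpNorm_one_eq_lintegral_enorm]
        exact enorm_integral_le_lintegral_enorm _
    _ ≤ C * eLpNorm (fun z ↦ z.1 - z.2) p π := hC π hπ

lemma exists_lipschitzOnWith_inv_sqrt {c : ℝ} (hc : 0 < c) :
    ∃ K : ℝ≥0, LipschitzOnWith K (fun a ↦ (√a)⁻¹) (Set.Ici c) := by
  refine ⟨⟨(c * √c)⁻¹, by positivity⟩, LipschitzOnWith.of_dist_le_mul fun a ha b hb ↦ ?_⟩
  have hsc : 0 < √c := Real.sqrt_pos.2 hc
  have hsa : √c ≤ √a := Real.sqrt_le_sqrt ha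
  have hsb : √c ≤ √b := Real.sqrt_le_sqrt hb
  have hsa' : 0 < √a := hsc.trans_le hsa
  have hsb' : 0 < √b := hsc.trans_le hsb
  have hden : c * √c ≤ √a * √b * (√a + √b) :=
    calc c * √c = √c * √c * √c := by rw [Real.mul_self_sqrt hc.le]
      _ ≤ √a * √b * (√a + √b) := by
          gcongr
          linarith
  have hrationalize : (√a)⁻¹ - (√b)⁻¹ = (√a * √b * (√a + √b))⁻¹ * (b - a) := by
    have hfactor : b - a = (√b - √a) * (√a + √b) := by
      linear_combination Real.sq_sqrt (hc.le.trans ha) - Real.sq_sqrt (hc.le.trans hb)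
    rw [hfactor]
    field_simp
  calc dist (√a)⁻¹ (√b)⁻¹ = (√a * √b * (√a + √b))⁻¹ * dist a b := by
        rw [Real.dist_eq, hrationalize, abs_mul, abs_of_pos (by positivity), dist_comm,
          Real.dist_eq]
    _ ≤ (c * √c)⁻¹ * dist a b := by gcongr

lemma GrowthLipschitz.couplingLipschitz_inv_sqrt_integral [ProperSpace E] {h : E → ℝ}
    (hh : GrowthLipschitz s h) (hpos : ∀ x, 0 < h x) (hsp : s + 1 ≤ p) (R : ℝ≥0) :
    CouplingLipschitz p R (fun μ ↦ (√(∫ x, h x ∂μ))⁻¹) := by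
  obtain ⟨c, hc, hle⟩ := hh.exists_pos_le_integral hpos hsp R
  obtain ⟨K, hK⟩ := exists_lipschitzOnWith_inv_sqrt hc
  exact (hh.couplingLipschitz_integral hsp R).comp_lipschitzOnWith hK hle

lemma CouplingLipschitz.exists_eLpNorm_clm_apply_sub_le [NormedSpace ℝ F] [NormedSpace ℝ G]
    {r : ℝ≥0} {g : E → F →L[ℝ] G} {Φ : Measure E → F} (hΦ : CouplingLipschitz p R Φ)
    (hg : GrowthLipschitz s g) (hr : 1 ≤ r) (hrp : r * (s + 1) ≤ p) :
    ∃ C : ℝ≥0, ∀ π ∈ momentCouplings p R,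
      eLpNorm (fun z ↦ g z.1 (Φ π.fst) - g z.2 (Φ π.snd)) r π ≤
        C * eLpNorm (fun z ↦ z.1 - z.2) p π := by
  obtain ⟨A, hA⟩ := hg.exists_eLpNorm_le hr hrp R
  obtain ⟨L, hL⟩ := hg.exists_eLpNorm_fst_sub_snd_le hr hrp R
  obtain ⟨B, hB⟩ := hΦ.exists_enorm_le
  obtain ⟨K, hK⟩ := hΦ
  have hgm := hg.continuous
  refine ⟨B * L + K * A, fun π hπ ↦ ?_⟩
  have hsnd : eLpNorm (fun z ↦ g z.2) r π = eLpNorm g r π.snd :=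
    (eLpNorm_map_measure hgm.aestronglyMeasurable measurable_snd.aemeasurable).symm
  calc eLpNorm (fun z ↦ g z.1 (Φ π.fst) - g z.2 (Φ π.snd)) r π
      = eLpNorm (fun z ↦ (g z.1 - g z.2) (Φ π.fst) + g z.2 (Φ π.fst - Φ π.snd)) r π := by
        simp only [sub_apply, map_sub, sub_add_sub_cancel]
    _ ≤ eLpNorm (fun z ↦ (g z.1 - g z.2) (Φ π.fst)) r π +
          eLpNorm (fun z ↦ g z.2 (Φ π.fst - Φ π.snd)) r π :=
        eLpNorm_add_le (Continuous.aestronglyMeasurable (by fun_prop))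
          (Continuous.aestronglyMeasurable (by fun_prop)) (mod_cast hr)
    _ ≤ ‖Φ π.fst‖ₑ * eLpNorm (fun z ↦ g z.1 - g z.2) r π +
          ‖Φ π.fst - Φ π.snd‖ₑ * eLpNorm g r π.snd := by
        grw [eLpNorm_clm_apply_le, eLpNorm_clm_apply_le, hsnd]
    _ ≤ B * (L * eLpNorm (fun z ↦ z.1 - z.2) p π) +
          K * eLpNorm (fun z ↦ z.1 - z.2) p π * A := by
        grw [hB _ hπ.1, hL π hπ, hK π hπ, hA _ hπ.2]
    _ = (B * L + K * A : ℝ≥0) * eLpNorm (fun z ↦ z.1 - z.2) p π := by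
        push_cast
        ring

end CouplingLipschitz

theorem coupling_stability_sqrt_ratio_general {E F G : Type*} [NormedAddCommGroup E]
    [MeasurableSpace E] [BorelSpace E] [ProperSpace E] [NormedAddCommGroup F] [NormedSpace ℝ F]
    [NormedAddCommGroup G] [NormedSpace ℝ G] {p r R s t : ℝ≥0} {g : E → F →L[ℝ] G} {h : E → ℝ}
    {S : Measure E → F} (hg : GrowthLipschitz s g) (hh : GrowthLipschitz t h)
    (hpos : ∀ x, 0 < h x) (hS : CouplingLipschitz p R S) (hr : 1 ≤ r) (hsp : r * (s + 1) ≤ p)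
    (htp : t + 1 ≤ p) :
    ∃ C : ℝ≥0, ∀ π ∈ momentCouplings p R,
      eLpNorm (fun z ↦ (√(∫ x, h x ∂π.fst))⁻¹ • g z.1 (S π.fst) -
        (√(∫ x, h x ∂π.snd))⁻¹ • g z.2 (S π.snd)) r π ≤
        C * eLpNorm (fun z ↦ z.1 - z.2) p π := by
  simpa only [map_smul] using
    ((hh.couplingLipschitz_inv_sqrt_integral hpos htp R).smul hS).exists_eLpNorm_clm_apply_sub_le
      hg hr hsp

section EuclideanSpace

variable {d k m n : ℕ} {p R : ℝ≥0}

lemma vecNorm_eq_norm_toLp (v : Fin k → ℝ) : vecNorm v = ‖(WithLp.toLp 2 v : Rd k)‖ := by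
  simp [vecNorm, EuclideanSpace.norm_eq]

/-- A matrix as an operator between Euclidean spaces; `Matrix.toEuclideanCLM` only covers square
matrices. -/
def matrixCLM : Matrix (Fin m) (Fin n) ℝ →ₗ[ℝ] (Rd n →L[ℝ] Rd m) :=
  (Matrix.toEuclideanLin.trans LinearMap.toContinuousLinearMap).toLinearMap

@[simp]
lemma matrixCLM_toLp (A : Matrix (Fin m) (Fin n) ℝ) (v : Fin n → ℝ) :
    matrixCLM A (WithLp.toLp 2 v) = WithLp.toLp 2 (A.mulVec v) :=
  rfl

lemma norm_matrixCLM_le (A : Matrix (Fin m) (Fin n) ℝ) : ‖matrixCLM A‖ ≤ frobNorm A := by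
  refine ContinuousLinearMap.opNorm_le_bound _ (Real.sqrt_nonneg _) fun v ↦ ?_
  rw [← WithLp.toLp_ofLp 2 v, matrixCLM_toLp, ← vecNorm_eq_norm_toLp, ← vecNorm_eq_norm_toLp,
    vecNorm, vecNorm, frobNorm, ← Real.sqrt_mul (by positivity), Finset.sum_mul]
  gcongr with i
  exact Finset.sum_mul_sq_le_sq_mul_sq Finset.univ (A i) v

lemma growthLipschitz_matrixCLM {E : Type*} [NormedAddCommGroup E] {s L : ℝ≥0}
    {g : E → Matrix (Fin m) (Fin n) ℝ}
    (hg : ∀ x y, frobNorm (g x - g y) ≤ L * (1 + ‖x‖ + ‖y‖) ^ (s : ℝ) * ‖x - y‖) :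
    GrowthLipschitz s (fun x ↦ matrixCLM (g x)) :=
  ⟨L, fun x y ↦ by grw [← map_sub, norm_matrixCLM_le, hg]⟩

lemma mem_momentBall_iff_momLE (hp : p ≠ 0) {μ : Measure (Rd d)} :
    μ ∈ momentBall p R ↔ IsProbabilityMeasure μ ∧ MomLE p R μ := by
  have hp' : (0 : ℝ) < p := mod_cast pos_iff_ne_zero.2 hp
  rw [momentBall, Set.mem_ofPred_eq, eLpNorm_nnreal_eq_lintegral hp, one_div,
    ENNReal.rpow_inv_le_iff hp', MomLE, ← ENNReal.ofReal_rpow_of_nonneg R.coe_nonneg hp'.le,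
    ENNReal.ofReal_coe_nnreal]
  rfl

lemma ofReal_Wp_le (hp : p ≠ 0) (π : Measure (Rd d × Rd d)) :
    ENNReal.ofReal (Wp p π.fst π.snd) ≤ eLpNorm (fun z ↦ z.1 - z.2) p π := by
  rw [eLpNorm_nnreal_eq_lintegral hp]
  exact ENNReal.ofReal_toReal_le.trans (sInf_le ⟨π, rfl, rfl, rfl⟩)

lemma couplingLipschitz_of_vecNorm_le_Wp (hp : p ≠ 0) {S : Measure (Rd d) → Fin n → ℝ} {K : ℝ≥0}
    (hS : ∀ μ ν : Measure (Rd d), IsProbabilityMeasure μ → IsProbabilityMeasure ν →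
      MomLE p R μ → MomLE p R ν → vecNorm (S μ - S ν) ≤ K * Wp p μ ν) :
    CouplingLipschitz p R (fun μ ↦ (WithLp.toLp 2 (S μ) : Rd n)) := by
  refine ⟨K, fun π ⟨hfst, hsnd⟩ ↦ ?_⟩
  rw [mem_momentBall_iff_momLE hp] at hfst hsnd
  calc ‖(WithLp.toLp 2 (S π.fst) : Rd n) - WithLp.toLp 2 (S π.snd)‖ₑ
      = ENNReal.ofReal (vecNorm (S π.fst - S π.snd)) := by
        rw [← WithLp.toLp_sub, vecNorm_eq_norm_toLp, ofReal_norm]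
    _ ≤ ENNReal.ofReal (K * Wp p π.fst π.snd) :=
        ENNReal.ofReal_le_ofReal (hS _ _ hfst.1 hsnd.1 hfst.2 hsnd.2)
    _ ≤ K * eLpNorm (fun z ↦ z.1 - z.2) p π := by
        rw [ENNReal.ofReal_mul K.coe_nonneg, ENNReal.ofReal_coe_nnreal]
        grw [ofReal_Wp_le hp]

lemma lintegral_vecNorm_sq_rpow {α : Type*} [MeasurableSpace α] (μ : Measure α)
    (f : α → Fin k → ℝ) :
    (∫⁻ x, ENNReal.ofReal (vecNorm (f x) ^ 2) ∂μ) ^ (1 / 2 : ℝ) =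
      eLpNorm (fun x ↦ (WithLp.toLp 2 (f x) : Rd k)) (2 : ℝ≥0) μ := by
  rw [eLpNorm_nnreal_eq_lintegral two_ne_zero]
  simp [vecNorm_eq_norm_toLp, ENNReal.ofReal_pow, ofReal_norm]

end EuclideanSpace

/-- **Mean-square stability estimate for `g(x) S(μ) / √(∫ h dμ)` along couplings.**
If `g, h` satisfy the local Lipschitz bound with exponent `ς`, `S` is `W_p`-Lipschitz on
`P_{p,R}(ℝ^d)`, and `p ≥ 2ς + 2`, then there is a constant `C > 0` such that for all
`μ, ν ∈ P_{p,R}(ℝ^d)` and every coupling `π` of `μ` and `ν`,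
`(∬ |g(x)S(μ)/√(∫h dμ) - g(y)S(ν)/√(∫h dν)|² dπ)^{1/2} ≤ C (∬ |x-y|^p dπ)^{1/p}`. -/
theorem coupling_stability_sqrt_ratio
    (d m n : ℕ) (hd : 1 ≤ d) (hm : 1 ≤ m) (hn : 1 ≤ n)
    (p R : ℝ) (hR : 0 < R)
    (g : Rd d → Matrix (Fin m) (Fin n) ℝ) (h : Rd d → ℝ) (hpos : ∀ x, 0 < h x)
    (S : Measure (Rd d) → (Fin n → ℝ))
    (ς L : ℝ) (hς : 0 ≤ ς) (hL : 0 < L)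
    (hlip : ∀ x y : Rd d,
      max (frobNorm (g x - g y)) |h x - h y| ≤ L * (1 + ‖x‖ + ‖y‖) ^ ς * ‖x - y‖)
    (LS : ℝ) (hLS : 0 < LS)
    (hSlip : ∀ μ ν : Measure (Rd d),
      IsProbabilityMeasure μ → IsProbabilityMeasure ν →
      MomLE p R μ → MomLE p R ν →
      vecNorm (S μ - S ν) ≤ LS * Wp p μ ν)
    (hp : 2 * ς + 2 ≤ p) :
    ∃ C > 0, ∀ μ ν : Measure (Rd d),
      IsProbabilityMeasure μ → IsProbabilityMeasure ν →
      MomLE p R μ → MomLE p R ν →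
      ∀ π : Measure (Rd d × Rd d), π.map Prod.fst = μ → π.map Prod.snd = ν →
      (∫⁻ z, ENNReal.ofReal
          ((vecNorm ((Real.sqrt (∫ x, h x ∂μ))⁻¹ • (g z.1).mulVec (S μ)
            - (Real.sqrt (∫ x, h x ∂ν))⁻¹ • (g z.2).mulVec (S ν))) ^ 2) ∂π) ^ (1 / 2 : ℝ)
        ≤ ENNReal.ofReal C *
          (∫⁻ z, (‖z.1 - z.2‖₊ : ℝ≥0∞) ^ p ∂π) ^ (1 / p) := by
  lift p to ℝ≥0 using by linarith
  lift ς to ℝ≥0 using hς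
  lift R to ℝ≥0 using hR.le
  lift L to ℝ≥0 using hL.le
  lift LS to ℝ≥0 using hLS.le
  have hp' : 2 * (ς + 1) ≤ p := by
    rw [mul_add_one]
    exact_mod_cast hp
  have hp0 : p ≠ 0 := (lt_of_lt_of_le (by positivity) hp').ne'
  have hg : GrowthLipschitz ς fun x ↦ matrixCLM (g x) :=
    growthLipschitz_matrixCLM fun x y ↦ (le_max_left _ _).trans (hlip x y)
  have hh : GrowthLipschitz ς h := ⟨L, fun x y ↦ (le_max_right _ _).trans (hlip x y)⟩
  obtain ⟨C, hC⟩ := coupling_stability_sqrt_ratio_general hg hh hpos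
    (couplingLipschitz_of_vecNorm_le_Wp hp0 hSlip) one_le_two hp'
    ((le_mul_of_one_le_left zero_le one_le_two).trans hp')
  refine ⟨C + 1, by positivity, ?_⟩
  rintro _ _ hμ hν hμR hνR π rfl rfl
  rw [lintegral_vecNorm_sq_rpow]
  refine (hC π ⟨(mem_momentBall_iff_momLE hp0).2 ⟨hμ, hμR⟩,
    (mem_momentBall_iff_momLE hp0).2 ⟨hν, hνR⟩⟩).trans ?_
  rw [eLpNorm_nnreal_eq_lintegral hp0, ← ENNReal.ofReal_coe_nnreal]
  gcongr
  · simp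
  · rfl

end
end

section
/- Fix β > 0, d ≥ 1, s ≥ 0, ℓ ≥ 0 and p ≥ 2, and suppose f ∈ A(s, ℓ, ℓ). Then there exists a constant C > 0, depending only on f, β and p, such that for every Borel probability measure μ on ℝ^d with ∫ |x|^p μ(dx) < ∞, both |M_β(μ)| ≤ C (∫ |x|^p μ(dx))^{1/p} and ‖√C_β(μ)‖_F ≤ C (∫ |x|^p μ(dx))^{1/p}. -/
open MeasureTheory ENNReal
open scoped NNReal

noncomputable section

/-!
`M_β(μ)` and `C_β(μ)` are the mean and the covariance matrix of the tilted probability measure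
`ν ∝ e^{-β f} μ`, and `‖√C_β(μ)‖_F^2 = tr C_β(μ)`. Hence `|M_β(μ)|^2 + ‖√C_β(μ)‖_F^2` is the
second moment of `ν`, and it is enough to bound it by a multiple of the second moment of `μ`.

Matching growth from above and below makes the weight `w = e^{-β f}` almost decreasing in the norm:
`w x ≤ D * w y` whenever `κ * |y| < |x|`. Such a weight satisfies a Chebyshev-type inequality
`∫ w |x|^2 dμ ≤ (κ^2 + D) (∫ w dμ) (∫ |x|^2 dμ)`.
-/

open ProbabilityTheory

section Tilting

variable {α : Type*} [MeasurableSpace α] {μ : Measure α} [IsProbabilityMeasure μ]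

/-- Distinguishing whether `K * φ y < φ x`, one has `w x * φ x ≤ K * (w x * φ y) + D * (w y * φ x)`
for all `x` and `y`; integrate over both variables. -/
lemma lintegral_mul_le_of_forall_lt_imp_le {w φ : α → ℝ≥0∞} (hw : AEMeasurable w μ)
    (hφ : AEMeasurable φ μ) {K D : ℝ≥0∞} (h : ∀ x y, K * φ y < φ x → w x ≤ D * w y) :
    ∫⁻ x, w x * φ x ∂μ ≤ (K + D) * ((∫⁻ x, w x ∂μ) * ∫⁻ x, φ x ∂μ) := by
  have pointwise (x y : α) : w x * φ x ≤ K * w x * φ y + D * φ x * w y := by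
    by_cases hxy : K * φ y < φ x
    · calc w x * φ x ≤ D * w y * φ x := by gcongr; exact h x y hxy
        _ = D * φ x * w y := mul_right_comm _ _ _
        _ ≤ _ := le_add_self
    · calc w x * φ x ≤ w x * (K * φ y) := by gcongr; exact not_lt.mp hxy
        _ = K * w x * φ y := by ring
        _ ≤ _ := le_self_add
  have integrated (x : α) :
      w x * φ x ≤ K * (∫⁻ y, φ y ∂μ) * w x + D * (∫⁻ y, w y ∂μ) * φ x :=
    calc w x * φ x = ∫⁻ _, w x * φ x ∂μ := by simp
      _ ≤ ∫⁻ y, K * w x * φ y + D * φ x * w y ∂μ := lintegral_mono (pointwise x)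
      _ = K * w x * ∫⁻ y, φ y ∂μ + D * φ x * ∫⁻ y, w y ∂μ := by
        rw [lintegral_add_left' (hφ.const_mul _), lintegral_const_mul'' _ hφ,
          lintegral_const_mul'' _ hw]
      _ = _ := by ring
  calc ∫⁻ x, w x * φ x ∂μ
      ≤ ∫⁻ x, K * (∫⁻ y, φ y ∂μ) * w x + D * (∫⁻ y, w y ∂μ) * φ x ∂μ := lintegral_mono integrated
    _ = K * (∫⁻ y, φ y ∂μ) * ∫⁻ x, w x ∂μ + D * (∫⁻ y, w y ∂μ) * ∫⁻ x, φ x ∂μ := by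
      rw [lintegral_add_left' (hw.const_mul _), lintegral_const_mul'' _ hw,
        lintegral_const_mul'' _ hφ]
    _ = _ := by ring

lemma lintegral_tilted_le {g : α → ℝ} {φ : α → ℝ≥0∞} (hg : AEMeasurable g μ)
    (hφ : AEMeasurable φ μ) {K : ℝ≥0∞} {c : ℝ} (h : ∀ x y, K * φ y < φ x → g x ≤ g y + c) :
    ∫⁻ x, φ x ∂μ.tilted g ≤ (K + ENNReal.ofReal (Real.exp c)) * ∫⁻ x, φ x ∂μ := by
  set w : α → ℝ≥0∞ := fun x => ENNReal.ofReal (Real.exp (g x) / ∫ y, Real.exp (g y) ∂μ)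
  have hw : AEMeasurable w μ := (hg.exp.div_const _).ennreal_ofReal
  have w_total : ∫⁻ x, w x ∂μ ≤ 1 :=
    calc ∫⁻ x, w x ∂μ = ∫⁻ _, 1 ∂μ.tilted g := by simp only [lintegral_tilted, mul_one, w]
      _ = μ.tilted g Set.univ := lintegral_one
      _ ≤ 1 := prob_le_one
  have w_le (x y : α) (hxy : K * φ y < φ x) : w x ≤ ENNReal.ofReal (Real.exp c) * w y := by
    rw [← ENNReal.ofReal_mul (Real.exp_pos c).le, mul_div_assoc', ← Real.exp_add]
    have : g x ≤ c + g y := by linarith [h x y hxy]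
    simp only [w]
    gcongr
  calc ∫⁻ x, φ x ∂μ.tilted g = ∫⁻ x, w x * φ x ∂μ := lintegral_tilted g φ
    _ ≤ (K + ENNReal.ofReal (Real.exp c)) * ((∫⁻ x, w x ∂μ) * ∫⁻ x, φ x ∂μ) :=
      lintegral_mul_le_of_forall_lt_imp_le hw hφ w_le
    _ ≤ (K + ENNReal.ofReal (Real.exp c)) * (1 * ∫⁻ x, φ x ∂μ) := by gcongr
    _ = _ := by rw [one_mul]

lemma eLpNorm_tilted_le {E : Type*} [NormedAddCommGroup E] {g : α → ℝ} {X : α → E}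
    (hg : AEMeasurable g μ) (hX : AEStronglyMeasurable X μ) {q : ℝ≥0∞} (hq₀ : q ≠ 0) (hq : q ≠ ∞)
    {κ : ℝ≥0} {c : ℝ} (h : ∀ x y, κ * ‖X y‖ < ‖X x‖ → g x ≤ g y + c) :
    eLpNorm X q (μ.tilted g) ≤
      ((κ : ℝ≥0∞) ^ q.toReal + ENNReal.ofReal (Real.exp c)) ^ (1 / q.toReal) * eLpNorm X q μ := by
  have hq_pos : 0 < q.toReal := ENNReal.toReal_pos hq₀ hq
  have h_rpow (x y : α) (hxy : (κ : ℝ≥0∞) ^ q.toReal * ‖X y‖ₑ ^ q.toReal < ‖X x‖ₑ ^ q.toReal) :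
      g x ≤ g y + c := by
    rw [← ENNReal.mul_rpow_of_nonneg _ _ hq_pos.le, ENNReal.rpow_lt_rpow_iff hq_pos,
      enorm_eq_nnnorm, enorm_eq_nnnorm] at hxy
    have hxy_nnreal : κ * ‖X y‖₊ < ‖X x‖₊ := mod_cast hxy
    exact h x y hxy_nnreal
  rw [eLpNorm_eq_lintegral_rpow_enorm_toReal hq₀ hq, eLpNorm_eq_lintegral_rpow_enorm_toReal hq₀ hq,
    ← ENNReal.mul_rpow_of_nonneg _ _ (by positivity)]
  gcongr
  exact lintegral_tilted_le hg (hX.enorm.pow_const _) h_rpow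

end Tilting

lemma integrable_exp_neg_mul_of_bddBelow {α : Type*} [MeasurableSpace α] {μ : Measure α}
    [IsFiniteMeasure μ] {f : α → ℝ} (hf : AEMeasurable f μ) (hbdd : BddBelow (Set.range f)) {β : ℝ}
    (hβ : 0 ≤ β) : Integrable (fun x => Real.exp (-β * f x)) μ := by
  obtain ⟨b, hb⟩ := hbdd
  refine .of_bound (hf.const_mul (-β)).exp.aestronglyMeasurable (Real.exp (-β * b)) (.of_forall ?_)
  intro x
  rw [Real.norm_of_nonneg (Real.exp_pos _).le, Real.exp_le_exp]
  exact mul_le_mul_of_nonpos_left (hb (Set.mem_range_self x)) (neg_nonpos.mpr hβ)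

lemma integral_norm_sq_eq_toReal_eLpNorm_sq {α E : Type*} [MeasurableSpace α] {μ : Measure α}
    [NormedAddCommGroup E] {X : α → E} (hX : AEStronglyMeasurable X μ) :
    ∫ x, ‖X x‖ ^ 2 ∂μ = (eLpNorm X 2 μ).toReal ^ 2 := by
  rw [toReal_eLpNorm hX, lpNorm_eq_integral_norm_rpow_toReal two_ne_zero ENNReal.ofNat_ne_top hX]
  simp only [ENNReal.toReal_ofNat, Real.rpow_ofNat]
  rw [← one_div, ← Real.sqrt_eq_rpow, Real.sq_sqrt (integral_nonneg fun x => sq_nonneg ‖X x‖)]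

/-- `f` increases with the norm, up to a factor `κ` in the radius and an additive error `c`, so that
the weight `e^{-β f}` decreases with the norm up to constants. -/
def CoarseRadialMono {E : Type*} [Norm E] (κ : ℝ≥0) (c : ℝ) (f : E → ℝ) : Prop :=
  ∀ x y, κ * ‖x‖ < ‖y‖ → f x ≤ f y + c

section CoarseRadialMono

variable {E : Type*} [NormedAddCommGroup E] {f : E → ℝ} {κ : ℝ≥0} {c : ℝ}

/-- The radii are comparable up to `κ = (b / a) ^ (1 / ℓ)`; the summand `b` of the error is what
makes the bound true for `ℓ = 0`. -/
lemma coarseRadialMono_of_rpow_growth {a A b B ℓ : ℝ} (ha : 0 < a) (hb : 0 ≤ b) (hℓ : 0 ≤ ℓ)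
    (hlower : ∀ x, a * ‖x‖ ^ ℓ - A ≤ f x) (hupper : ∀ x, f x ≤ b * ‖x‖ ^ ℓ + B) :
    CoarseRadialMono ((b / a) ^ (1 / ℓ)).toNNReal (b + A + B) f := by
  intro x y hxy
  rw [Real.coe_toNNReal _ (by positivity)] at hxy
  have radial : b * ‖x‖ ^ ℓ ≤ a * ‖y‖ ^ ℓ + b := by
    rcases hℓ.eq_or_lt with rfl | hℓ_pos
    · simp only [Real.rpow_zero]
      linarith
    · calc b * ‖x‖ ^ ℓ = a * ((b / a) ^ (1 / ℓ) * ‖x‖) ^ ℓ := by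
            rw [Real.mul_rpow (by positivity) (by positivity), ← Real.rpow_mul (by positivity),
              one_div_mul_cancel hℓ_pos.ne', Real.rpow_one]
            field_simp
        _ ≤ a * ‖y‖ ^ ℓ := by gcongr
        _ ≤ a * ‖y‖ ^ ℓ + b := le_add_of_nonneg_right hb
  linarith [hlower y, hupper x]

lemma CoarseRadialMono.bddBelow (hf : CoarseRadialMono κ c f) : BddBelow (Set.range f) := by
  refine ⟨f 0 - max c 0, Set.forall_mem_range.mpr fun x => ?_⟩
  rcases eq_or_ne x 0 with rfl | hx
  · linarith [le_max_right c 0]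
  · have : f 0 ≤ f x + c := hf 0 x (by simpa using hx)
    linarith [le_max_left c 0]

variable [SecondCountableTopology E] [MeasurableSpace E] [OpensMeasurableSpace E] {μ : Measure E}
  [IsProbabilityMeasure μ] {β : ℝ}

lemma CoarseRadialMono.eLpNorm_two_tilted_le (hmono : CoarseRadialMono κ c f)
    (hf : AEMeasurable f μ) (hβ : 0 ≤ β) :
    eLpNorm (fun x => x) 2 (μ.tilted fun x => -β * f x) ≤
      ENNReal.ofReal √(κ ^ 2 + Real.exp (β * c)) * eLpNorm (fun x => x) 2 μ := by
  have tilted_le := eLpNorm_tilted_le (X := fun x => x) (κ := κ) (c := β * c) (hf.const_mul (-β))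
    aestronglyMeasurable_id two_ne_zero ENNReal.ofNat_ne_top fun x y hxy => by
      linarith [mul_le_mul_of_nonneg_left (hmono y x hxy) hβ]
  rw [Real.sqrt_eq_rpow, ← ENNReal.ofReal_rpow_of_pos (by positivity),
    ENNReal.ofReal_add (by positivity) (by positivity), ENNReal.ofReal_pow κ.coe_nonneg,
    ENNReal.ofReal_coe_nnreal]
  simpa only [ENNReal.toReal_ofNat, ENNReal.rpow_ofNat] using tilted_le

lemma CoarseRadialMono.memLp_two_tilted (hmono : CoarseRadialMono κ c f)
    (hf : AEMeasurable f μ) (hβ : 0 ≤ β) (hμ : MemLp (fun x => x) 2 μ) :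
    MemLp (fun x => x) 2 (μ.tilted fun x => -β * f x) :=
  ⟨aestronglyMeasurable_id, (hmono.eLpNorm_two_tilted_le hf hβ).trans_lt
    (ENNReal.mul_lt_top ENNReal.ofReal_lt_top hμ.eLpNorm_lt_top)⟩

lemma CoarseRadialMono.integral_norm_sq_tilted_le (hmono : CoarseRadialMono κ c f)
    (hf : AEMeasurable f μ) (hβ : 0 ≤ β) (hμ : MemLp (fun x => x) 2 μ) :
    ∫ x, ‖x‖ ^ 2 ∂μ.tilted (fun x => -β * f x) ≤
      (κ ^ 2 + Real.exp (β * c)) * ∫ x, ‖x‖ ^ 2 ∂μ := by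
  have hν := hmono.memLp_two_tilted hf hβ hμ
  rw [integral_norm_sq_eq_toReal_eLpNorm_sq hν.aestronglyMeasurable,
    integral_norm_sq_eq_toReal_eLpNorm_sq hμ.aestronglyMeasurable,
    ← Real.sq_sqrt (by positivity : 0 ≤ κ ^ 2 + Real.exp (β * c)), ← mul_pow]
  gcongr
  rw [← ENNReal.toReal_ofReal (Real.sqrt_nonneg _), ← ENNReal.toReal_mul]
  exact ENNReal.toReal_mono (ENNReal.mul_ne_top ENNReal.ofReal_ne_top hμ.eLpNorm_ne_top)
    (hmono.eLpNorm_two_tilted_le hf hβ)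

end CoarseRadialMono

lemma sum_variance_add_norm_integral_sq {ι Ω : Type*} [Fintype ι] [MeasurableSpace Ω]
    {ν : Measure Ω} [IsProbabilityMeasure ν] {X : Ω → EuclideanSpace ℝ ι} (hX : MemLp X 2 ν) :
    ∑ i, Var[fun ω => X ω i; ν] + ‖∫ ω, X ω ∂ν‖ ^ 2 = ∫ ω, ‖X ω‖ ^ 2 ∂ν := by
  have hXi (i : ι) : MemLp (fun ω => X ω i) 2 ν := hX.eval_piLp i
  have mean_apply (i : ι) : (∫ ω, X ω ∂ν) i = ∫ ω, X ω i ∂ν :=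
    eval_integral_piLp (fun j => (hXi j).integrable one_le_two) i
  simp_rw [EuclideanSpace.real_norm_sq_eq, mean_apply]
  rw [integral_finsetSum _ fun i _ => (hXi i).integrable_sq, ← Finset.sum_add_distrib]
  refine Finset.sum_congr rfl fun i _ => ?_
  rw [variance_eq_sub (hXi i)]
  exact sub_add_cancel _ _

lemma IsPSDSqrt.frobNorm_eq_sqrt_trace {d : ℕ} {S A : Matrix (Fin d) (Fin d) ℝ}
    (h : IsPSDSqrt S A) : frobNorm S = √A.trace := by
  obtain ⟨hS, rfl⟩ := h
  have symm (i j : Fin d) : S j i = S i j := hS.isHermitian.apply i j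
  simp only [frobNorm, Matrix.trace, Matrix.diag_apply, Matrix.mul_apply, symm, sq]

section WeightedMoments

variable {d : ℕ} {β : ℝ} {f : Rd d → ℝ} {μ : Measure (Rd d)}

lemma wMean_eq_integral_tilted :
    wMean β f μ = ∫ x, x ∂μ.tilted fun x => -β * f x := by
  simp only [wMean, wFn, integral_tilted, div_eq_inv_mul, mul_smul, integral_smul]

lemma wCov_apply_eq_integral_tilted (i j : Fin d) :
    wCov β f μ i j =
      ∫ x, (x i - wMean β f μ i) * (x j - wMean β f μ j) ∂μ.tilted fun x => -β * f x := by
  simp only [wCov, wFn, integral_tilted, div_eq_inv_mul, smul_eq_mul, mul_assoc,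
    integral_const_mul]

lemma wCov_self_eq_variance_tilted (hid : Integrable (fun x => x) (μ.tilted fun x => -β * f x))
    (i : Fin d) :
    wCov β f μ i i = Var[fun x => x i; μ.tilted fun x => -β * f x] := by
  have mean_apply : wMean β f μ i = ∫ x, x i ∂μ.tilted fun x => -β * f x := by
    rw [wMean_eq_integral_tilted]
    exact eval_integral_piLp (fun j => hid.eval_piLp j) i
  rw [variance_eq_integral (hid.eval_piLp i).aemeasurable, wCov_apply_eq_integral_tilted,
    mean_apply]
  simp only [sq]

lemma trace_wCov_nonneg : 0 ≤ (wCov β f μ).trace :=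
  Finset.sum_nonneg fun i _ => by
    rw [Matrix.diag_apply, wCov_apply_eq_integral_tilted]
    exact integral_nonneg fun x => mul_self_nonneg _

lemma trace_wCov_add_norm_wMean_sq [IsProbabilityMeasure (μ.tilted fun x => -β * f x)]
    (hid : MemLp (fun x => x) 2 (μ.tilted fun x => -β * f x)) :
    (wCov β f μ).trace + ‖wMean β f μ‖ ^ 2 = ∫ x, ‖x‖ ^ 2 ∂μ.tilted fun x => -β * f x := by
  rw [← sum_variance_add_norm_integral_sq hid, wMean_eq_integral_tilted]
  simp only [Matrix.trace, Matrix.diag_apply,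
    wCov_self_eq_variance_tilted (hid.integrable one_le_two)]

lemma eLpNorm_ofReal_eq_lintegral_nnnorm_rpow {p : ℝ} (hp : 0 < p) :
    eLpNorm (fun x => x) (ENNReal.ofReal p) μ =
      (∫⁻ x, (‖x‖₊ : ℝ≥0∞) ^ p ∂μ) ^ (1 / p) := by
  rw [eLpNorm_eq_lintegral_rpow_enorm_toReal (by simpa using hp) ENNReal.ofReal_ne_top,
    ENNReal.toReal_ofReal hp.le]
  rfl

lemma MomFin.memLp {p : ℝ} (hp : 0 < p) (hfin : MomFin p μ) :
    MemLp (fun x => x) (ENNReal.ofReal p) μ :=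
  ⟨aestronglyMeasurable_id, eLpNorm_ofReal_eq_lintegral_nnnorm_rpow hp ▸
    ENNReal.rpow_lt_top_of_nonneg (by positivity) hfin.ne⟩

lemma MomFin.memLp_two [IsFiniteMeasure μ] {p : ℝ} (hp : 2 ≤ p) (hfin : MomFin p μ) :
    MemLp (fun x => x) 2 μ :=
  (hfin.memLp (by linarith)).mono_exponent (ENNReal.ofNat_le_ofReal.mpr hp)

lemma MomFin.integral_norm_sq_le [IsProbabilityMeasure μ] {p : ℝ} (hp : 2 ≤ p)
    (hfin : MomFin p μ) :
    ∫ x, ‖x‖ ^ 2 ∂μ ≤ ((∫⁻ x, (‖x‖₊ : ℝ≥0∞) ^ p ∂μ).toReal ^ (1 / p)) ^ 2 := by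
  have hp_pos : 0 < p := by linarith
  rw [integral_norm_sq_eq_toReal_eLpNorm_sq (hfin.memLp_two hp).aestronglyMeasurable,
    ENNReal.toReal_rpow, ← eLpNorm_ofReal_eq_lintegral_nnnorm_rpow hp_pos]
  gcongr
  · exact (hfin.memLp hp_pos).eLpNorm_ne_top
  · exact eLpNorm_le_eLpNorm_of_exponent_le (ENNReal.ofNat_le_ofReal.mpr hp)
      aestronglyMeasurable_id

theorem weighted_moments_norm_bound_general [IsProbabilityMeasure μ] (hβ : 0 ≤ β) {p : ℝ}
    (hp : 2 ≤ p) (hf : AEMeasurable f μ) {κ : ℝ≥0} {c : ℝ} (hmono : CoarseRadialMono κ c f)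
    (hfin : MomFin p μ) :
    ‖wMean β f μ‖ ≤
        √(κ ^ 2 + Real.exp (β * c)) * ((∫⁻ x, (‖x‖₊ : ℝ≥0∞) ^ p ∂μ).toReal) ^ (1 / p) ∧
      ∀ S : Matrix (Fin d) (Fin d) ℝ, IsPSDSqrt S (wCov β f μ) →
        frobNorm S ≤
          √(κ ^ 2 + Real.exp (β * c)) * ((∫⁻ x, (‖x‖₊ : ℝ≥0∞) ^ p ∂μ).toReal) ^ (1 / p) := by
  set R := (∫⁻ x, (‖x‖₊ : ℝ≥0∞) ^ p ∂μ).toReal ^ (1 / p)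
  have : IsProbabilityMeasure (μ.tilted fun x => -β * f x) :=
    isProbabilityMeasure_tilted (integrable_exp_neg_mul_of_bddBelow hf hmono.bddBelow hβ)
  have hμ : MemLp (fun x => x) 2 μ := hfin.memLp_two hp
  have hν : MemLp (fun x => x) 2 (μ.tilted fun x => -β * f x) := hmono.memLp_two_tilted hf hβ hμ
  have sum_le : (wCov β f μ).trace + ‖wMean β f μ‖ ^ 2 ≤ (√(κ ^ 2 + Real.exp (β * c)) * R) ^ 2 :=
    calc (wCov β f μ).trace + ‖wMean β f μ‖ ^ 2
        = ∫ x, ‖x‖ ^ 2 ∂μ.tilted fun x => -β * f x := trace_wCov_add_norm_wMean_sq hν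
      _ ≤ (κ ^ 2 + Real.exp (β * c)) * ∫ x, ‖x‖ ^ 2 ∂μ :=
        hmono.integral_norm_sq_tilted_le hf hβ hμ
      _ ≤ (κ ^ 2 + Real.exp (β * c)) * R ^ 2 := by
        gcongr
        exact hfin.integral_norm_sq_le hp
      _ = (√(κ ^ 2 + Real.exp (β * c)) * R) ^ 2 := by
        rw [mul_pow, Real.sq_sqrt (by positivity)]
  have trace_nonneg : 0 ≤ (wCov β f μ).trace := trace_wCov_nonneg
  refine ⟨(sq_le_sq₀ (norm_nonneg _) (by positivity)).mp (by linarith), fun S hS => ?_⟩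
  rw [hS.frobNorm_eq_sqrt_trace]
  exact Real.sqrt_le_iff.mpr ⟨by positivity, by linarith [sq_nonneg ‖wMean β f μ‖]⟩

end WeightedMoments

lemma ClassA.continuous_s19 {d : ℕ} {s ℓ u : ℝ} {f : Rd d → ℝ} (hf : ClassA s ℓ u f) :
    Continuous f := by
  obtain ⟨L, -, hL⟩ := hf.lip
  refine continuous_iff_continuousAt.mpr fun x => tendsto_iff_dist_tendsto_zero.mpr ?_
  have modulus_continuous : Continuous fun y => L * (1 + ‖y‖ + ‖x‖) ^ s * ‖y - x‖ :=
    (continuous_const.mul (.rpow_const (by fun_prop) fun y => .inl (by positivity))).mul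
      (by fun_prop)
  have modulus_tendsto := modulus_continuous.tendsto x
  simp only [sub_self, norm_zero, mul_zero] at modulus_tendsto
  exact squeeze_zero (fun _ => dist_nonneg) (fun y => hL y x) modulus_tendsto

lemma ClassA.exists_coarseRadialMono {d : ℕ} {s ℓ : ℝ} {f : Rd d → ℝ} (hf : ClassA s ℓ ℓ f)
    (hℓ : 0 ≤ ℓ) : ∃ κ c, CoarseRadialMono κ c f := by
  obtain ⟨cl, hcl, Cl, -, hlower⟩ := hf.growth_lower
  obtain ⟨cu, hcu, Cu, -, hupper⟩ := hf.growth_upper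
  exact ⟨_, _, coarseRadialMono_of_rpow_growth (A := Cl - fStar f) (B := Cu + fStar f) hcl hcu.le hℓ
    (fun x => by linarith [hlower x]) fun x => by linarith [hupper x]⟩

/-- **Bound on the weighted mean and the square root of the weighted covariance by
moments.**
If `f ∈ A(s, ℓ, ℓ)` and `p ≥ 2`, there is `C > 0` such that for every probability
measure `μ` with finite `p`-th moment, `|M_β(μ)| ≤ C (∫ |x|^p dμ)^{1/p}` and
`‖√C_β(μ)‖_F ≤ C (∫ |x|^p dμ)^{1/p}`. -/
theorem weighted_moments_norm_bound
    (β : ℝ) (hβ : 0 < β) (d : ℕ) (hd : 1 ≤ d)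
    (s ℓ : ℝ) (hs : 0 ≤ s) (hℓ : 0 ≤ ℓ) (p : ℝ) (hp : 2 ≤ p)
    (f : Rd d → ℝ) (hf : ClassA s ℓ ℓ f) :
    ∃ C > 0, ∀ μ : Measure (Rd d), IsProbabilityMeasure μ → MomFin p μ →
      ‖wMean β f μ‖ ≤ C * ((∫⁻ x, (‖x‖₊ : ℝ≥0∞) ^ p ∂μ).toReal) ^ (1 / p) ∧
      ∀ S : Matrix (Fin d) (Fin d) ℝ, IsPSDSqrt S (wCov β f μ) →
        frobNorm S ≤ C * ((∫⁻ x, (‖x‖₊ : ℝ≥0∞) ^ p ∂μ).toReal) ^ (1 / p) := by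
  obtain ⟨κ, c, hmono⟩ := hf.exists_coarseRadialMono hℓ
  exact ⟨√(κ ^ 2 + Real.exp (β * c)), by positivity, fun μ _ hfin =>
    weighted_moments_norm_bound_general hβ.le hp hf.continuous_s19.aemeasurable hmono hfin⟩

end
end
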